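/- arXiv:2303.17794 — 4 statements merged into one kernel-verified Lean document; each statement's English description precedes it below -/
import Mathlib

section
/- Let b > 0 and q ∈ (−1/b, b], and let P = P_{q,b} ⊂ ℝ² be the pentagon defined as the convex hull of the five points (−1/b, 0), (q, r), (q, −r), (b, c), (b, −c), where r = √(1+q²) and c = (1+bq)/√(1+q²). Then the polar body of P equals −P, i.e., P° = {−p : p ∈ P}. -/
open MeasureTheory

noncomputable section

/-- The polar body `K° = {y | ⟨x, y⟩ ≤ 1 for all x ∈ K}` in the plane. -/
def polarBody (K : Set (Fin 2 → ℝ)) : Set (Fin 2 → ℝ) :=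
  {y | ∀ x ∈ K, x 0 * y 0 + x 1 * y 1 ≤ 1}

/-- The volume product `vp(K) = |K| · |K°|`. -/
def vp (K : Set (Fin 2 → ℝ)) : ℝ :=
  (volume K).toReal * (volume (polarBody K)).toReal

/-- The barycenter `G_A = |A|⁻¹ ∫_A x dx`. -/
def bary (A : Set (Fin 2 → ℝ)) : Fin 2 → ℝ :=
  (volume A).toReal⁻¹ • ∫ x in A, x

/-- The covariance matrix `cov(K)_{ij} = |K|⁻¹ ∫_K x_i x_j dx`. -/
def covM (K : Set (Fin 2 → ℝ)) : Matrix (Fin 2) (Fin 2) ℝ :=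
  Matrix.of fun i j => (volume K).toReal⁻¹ * ∫ x in K, x i * x j

/-- The pentagon `P_{q,b}`: convex hull of `(-1/b, 0)`, `(q, ±r)`, `(b, ±c)`
where `r = √(1+q²)` and `c = (1+bq)/√(1+q²)`. -/
def pent (q b : ℝ) : Set (Fin 2 → ℝ) :=
  convexHull ℝ
    {![-1/b, 0], ![q, Real.sqrt (1 + q ^ 2)], ![q, -Real.sqrt (1 + q ^ 2)],
      ![b, (1 + b * q) / Real.sqrt (1 + q ^ 2)], ![b, -((1 + b * q) / Real.sqrt (1 + q ^ 2))]}

theorem half_convex (y : Fin 2 → ℝ) : Convex ℝ {x : Fin 2 → ℝ | -1 ≤ x 0 * y 0 + x 1 * y 1} := by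
  intro u hu v hv a b ha hb hab
  simp only [Set.mem_ofPred_eq, Pi.add_apply, Pi.smul_apply, smul_eq_mul] at *
  have h1 := mul_le_mul_of_nonneg_left hu ha
  have h2 := mul_le_mul_of_nonneg_left hv hb
  nlinarith

theorem comb4 (S : Set (Fin 2 → ℝ)) (hS : Convex ℝ S) (p : Fin 4 → Fin 2 → ℝ) (w : Fin 4 → ℝ)
    (hp : ∀ i, p i ∈ S) (hw : ∀ i, 0 ≤ w i) (h1 : w 0 + w 1 + w 2 + w 3 = 1) (z : Fin 2 → ℝ)
    (hz : ∀ j, w 0 * p 0 j + w 1 * p 1 j + w 2 * p 2 j + w 3 * p 3 j = z j) : z ∈ S := by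
  have := hS.sum_mem (t := Finset.univ) (w := w) (z := p) (fun i _ => hw i)
    (by rw [Fin.sum_univ_four]; exact h1) (fun i _ => hp i)
  rw [Fin.sum_univ_four] at this
  convert this using 1
  ext j
  simp [← hz j]

theorem stmt12 (b q : ℝ) (hb : 0 < b) (hq : q ∈ Set.Ioc (-1/b) b) :
    polarBody (pent q b) = -(pent q b) := by
  obtain ⟨hq1, hq2⟩ := hq
  have hbq : 0 < 1 + b * q := by
    rw [div_lt_iff₀ hb] at hq1; nlinarith
  unfold pent
  have hr : 0 < Real.sqrt (1 + q ^ 2) := Real.sqrt_pos.2 (by positivity)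
  have hr2 : Real.sqrt (1 + q ^ 2) ^ 2 = 1 + q ^ 2 := Real.sq_sqrt (by positivity)
  generalize Real.sqrt (1 + q ^ 2) = r at hr hr2
  obtain ⟨c, hc⟩ : ∃ c, c = (1 + b * q) / r := ⟨_, rfl⟩
  rw [← hc]
  have hrc : r * c = 1 + b * q := by rw [hc]; field_simp
  have hcpos : 0 < c := by rw [hc]; positivity
  obtain ⟨a, ha⟩ : ∃ a, a = -1 / b := ⟨_, rfl⟩
  rw [← ha]
  have hab : a * b = -1 := by rw [ha]; field_simp
  have hapos : a < 0 := by nlinarith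
  have hc2 : c ^ 2 ≤ 1 + b ^ 2 := by
    have : r ^ 2 * c ^ 2 ≤ r ^ 2 * (1 + b ^ 2) := by
      rw [← mul_pow, hrc, hr2]; nlinarith [sq_nonneg (b - q)]
    exact le_of_mul_le_mul_left this (by positivity)
  have haq : -1 ≤ a * q := by nlinarith
  clear ha hc hq1
  set V : Set (Fin 2 → ℝ) := {![a, 0], ![q, r], ![q, -r], ![b, c], ![b, -c]} with hV
  have key : ∀ x ∈ V, ∀ y ∈ V, -1 ≤ x 0 * y 0 + x 1 * y 1 := by
    intro x hx y hy
    simp only [hV, Set.mem_insert_iff, Set.mem_singleton_iff] at hx hy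
    rcases hx with rfl | rfl | rfl | rfl | rfl <;> rcases hy with rfl | rfl | rfl | rfl | rfl <;>
      simp <;> nlinarith
  have key2 : ∀ x ∈ convexHull ℝ V, ∀ y ∈ convexHull ℝ V, -1 ≤ x 0 * y 0 + x 1 * y 1 := by
    have h1 : ∀ y ∈ V, ∀ x ∈ convexHull ℝ V, -1 ≤ x 0 * y 0 + x 1 * y 1 := fun y hy x hx =>
      convexHull_min (fun x hx => key x hx y hy) (half_convex y) hx
    intro x hx y hy
    have := convexHull_min (fun y hy => (by
      have := h1 y hy x hx
      simp only [Set.mem_ofPred_eq]; linarith)) (half_convex x) hy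
    simp only [Set.mem_ofPred_eq] at this
    linarith
  ext y
  rw [Set.mem_neg]
  constructor
  · intro hy
    have hV' : V ⊆ convexHull ℝ V := subset_convexHull ℝ V
    have mA : ![a, 0] ∈ convexHull ℝ V := hV' (by simp [hV])
    have mB : ![q, r] ∈ convexHull ℝ V := hV' (by simp [hV])
    have mB' : ![q, -r] ∈ convexHull ℝ V := hV' (by simp [hV])
    have mC : ![b, c] ∈ convexHull ℝ V := hV' (by simp [hV])
    have mC' : ![b, -c] ∈ convexHull ℝ V := hV' (by simp [hV])
    have eA := hy _ mA
    have eB := hy _ mB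
    have eB' := hy _ mB'
    have eC := hy _ mC
    have eC' := hy _ mC'
    obtain ⟨s, hs⟩ : ∃ s, s = -y 0 := ⟨_, rfl⟩
    obtain ⟨t, ht⟩ : ∃ t, t = -y 1 := ⟨_, rfl⟩
    have hs' : y 0 = -s := by rw [hs]; ring
    have ht' : y 1 = -t := by rw [ht]; ring
    simp only [Matrix.cons_val_zero, Matrix.cons_val_one, hs', ht'] at eA eB eB' eC eC'
    have hsb : s ≤ b := by nlinarith
    rcases le_or_gt s q with hsq | hsq
    · obtain ⟨l, hl⟩ : ∃ l, l = (1 + b * s) / (1 + b * q) := ⟨_, rfl⟩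
      obtain ⟨m, hm⟩ : ∃ m, m = t / r := ⟨_, rfl⟩
      have hl1 : l ≤ 1 := by
        rw [hl, div_le_one hbq]; nlinarith
      have hl' : l * (1 + b * q) = 1 + b * s := by rw [hl]; field_simp
      have hm' : m * r = t := by rw [hm]; field_simp
      have h1 : 0 ≤ l + m := by
        have : 0 ≤ (l + m) * (r * c) := by
          have : (l + m) * (r * c) = 1 + b * s + t * c := by rw [← hl', ← hm', ← hrc]; ring
          rw [this]; linarith
        exact nonneg_of_mul_nonneg_left this (by positivity)
      have h2 : 0 ≤ l - m := by
        have : 0 ≤ (l - m) * (r * c) := by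
          have : (l - m) * (r * c) = 1 + b * s - t * c := by rw [← hl', ← hm', ← hrc]; ring
          rw [this]; linarith
        exact nonneg_of_mul_nonneg_left this (by positivity)
      refine comb4 _ (convex_convexHull ℝ V) ![![a, 0], ![q, r], ![q, -r], ![b, c]]
        ![1 - l, (l + m) / 2, (l - m) / 2, 0] ?_ ?_ ?_ _ ?_
      · intro i; fin_cases i <;> assumption
      · intro i; fin_cases i <;> simp <;> linarith
      · simp; ring
      · intro j
        fin_cases j
        · simp [← hs]
          have : b * ((1 - l) * a + (l + m) / 2 * q + (l - m) / 2 * q) = b * s := by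
            linear_combination hl' + (1 - l) * hab
          exact mul_left_cancel₀ hb.ne' this
        · simp [← ht]
          linear_combination hm'
    · have hqb : 0 < b - q := by linarith
      have hh : 0 < 1 + s * q := by
        rcases le_or_gt 0 q with h | h <;> nlinarith
      obtain ⟨l, hl⟩ : ∃ l, l = (s - q) / (b - q) := ⟨_, rfl⟩
      obtain ⟨m, hm⟩ : ∃ m, m = t * r / (1 + s * q) := ⟨_, rfl⟩
      have hl0 : 0 ≤ l := by rw [hl]; exact div_nonneg (by linarith) hqb.le
      have hl1 : l ≤ 1 := by rw [hl, div_le_one hqb]; linarith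
      have hl' : l * (b - q) = s - q := by rw [hl]; field_simp
      have hm' : m * (1 + s * q) = t * r := by rw [hm]; field_simp
      have h1 : m ≤ 1 := by rw [hm, div_le_one hh]; linarith
      have h2 : -1 ≤ m := by rw [hm, le_div_iff₀ hh]; linarith
      have h3 : 0 ≤ (1 + m) / 2 := by linarith
      have h4 : 0 ≤ (1 - m) / 2 := by linarith
      have h5 : 0 ≤ 1 - l := by linarith
      refine comb4 _ (convex_convexHull ℝ V) ![![q, r], ![q, -r], ![b, c], ![b, -c]]
        ![(1 - l) * ((1 + m) / 2), (1 - l) * ((1 - m) / 2), l * ((1 + m) / 2), l * ((1 - m) / 2)]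
        ?_ ?_ ?_ _ ?_
      · intro i; fin_cases i <;> assumption
      · intro i; fin_cases i <;> simp only [] <;> apply mul_nonneg <;> assumption
      · simp; ring
      · intro j
        fin_cases j
        · simp [← hs]
          linear_combination hl'
        · simp [← ht]
          apply mul_left_cancel₀ hr.ne'
          linear_combination hm' + (1 - l) * m * hr2 + l * m * hrc + m * q * hl'
  · intro hy x hx
    have := key2 x hx _ hy
    simp only [Pi.neg_apply] at this
    linarith
end
end

section
/- Let b > 0 and q ∈ (−1/b, b], and let P = P_{q,b} ⊂ ℝ² be the pentagon defined as the convex hull of the five points (−1/b, 0), (q, ±r), (b, ±c), where r = √(1+q²) and c = (1+bq)/√(1+q²). Then the barycenter of P lies at the origin if and only if f(q,b) = q³b − q²b² − q² + 2qb⁵ + qb + 3b⁴ = 1. -/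
open MeasureTheory

noncomputable section

lemma aux_hull (b q r c : ℝ) (hb : 0 < b) (hq1 : -1 < b * q) (hqb : q ≤ b) (hr : 0 < r)
    (hr2 : r ^ 2 = 1 + q ^ 2) (hc : c = (1 + b * q) / r) :
    convexHull ℝ {![-1/b, 0], ![q, r], ![q, -r], ![b, c], ![b, -c]} =
      {v : Fin 2 → ℝ | v 0 ≤ b ∧ |v 1| ≤ r * (b * v 0 + 1) / (1 + b * q) ∧
        |v 1| ≤ (1 + q * v 0) / r} := by
  have hD : 0 < 1 + b * q := by linarith
  have hcpos : 0 < c := by rw [hc]; positivity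
  apply Set.Subset.antisymm
  · apply convexHull_min
    · intro v hv
      simp only [Set.mem_insert_iff, Set.mem_singleton_iff] at hv
      have e1 : r * (b * q + 1) / (1 + b * q) = r := by field_simp; ring
      have e2 : (1 + q * q) / r = r := by field_simp; linarith
      have e3 : c ≤ r * (b * b + 1) / (1 + b * q) := by
        rw [hc, div_le_div_iff₀ hr hD]
        have : r * (b * b + 1) * r = (1 + q ^ 2) * (b * b + 1) := by rw [← hr2]; ring
        rw [this]; nlinarith [sq_nonneg (b - q)]
      have e4 : (1 + q * b) / r = c := by rw [hc, mul_comm]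
      rcases hv with rfl | rfl | rfl | rfl | rfl
      · have h1 : b * (-1 / b) + 1 = 0 := by field_simp; norm_num
        have h2 : 0 ≤ 1 + q * (-1 / b) := by
          have : 1 + q * (-1 / b) = (b - q) / b := by field_simp; ring
          rw [this]; exact div_nonneg (by linarith) hb.le
        refine ⟨?_, ?_, ?_⟩
        · show -1 / b ≤ b
          have : -1 / b < 0 := div_neg_of_neg_of_pos (by norm_num) hb
          linarith
        · show |(0:ℝ)| ≤ r * (b * (-1 / b) + 1) / (1 + b * q)
          rw [h1]; simp
        · show |(0:ℝ)| ≤ (1 + q * (-1 / b)) / r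
          rw [abs_zero]; positivity
      · refine ⟨hqb, ?_, ?_⟩
        · show |r| ≤ r * (b * q + 1) / (1 + b * q)
          rw [e1, abs_of_pos hr]
        · show |r| ≤ (1 + q * q) / r
          rw [e2, abs_of_pos hr]
      · refine ⟨hqb, ?_, ?_⟩
        · show |-r| ≤ r * (b * q + 1) / (1 + b * q)
          rw [e1, abs_neg, abs_of_pos hr]
        · show |-r| ≤ (1 + q * q) / r
          rw [e2, abs_neg, abs_of_pos hr]
      · refine ⟨le_refl b, ?_, ?_⟩
        · show |c| ≤ r * (b * b + 1) / (1 + b * q)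
          rw [abs_of_pos hcpos]; exact e3
        · show |c| ≤ (1 + q * b) / r
          rw [e4, abs_of_pos hcpos]
      · refine ⟨le_refl b, ?_, ?_⟩
        · show |-c| ≤ r * (b * b + 1) / (1 + b * q)
          rw [abs_neg, abs_of_pos hcpos]; exact e3
        · show |-c| ≤ (1 + q * b) / r
          rw [e4, abs_neg, abs_of_pos hcpos]
    · intro v ⟨hv1, hv2, hv3⟩ w ⟨hw1, hw2, hw3⟩ s t hs ht hst
      have habs : |s * v 1 + t * w 1| ≤ s * |v 1| + t * |w 1| := by
        refine (abs_add_le _ _).trans ?_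
        rw [abs_mul, abs_mul, abs_of_nonneg hs, abs_of_nonneg ht]
      have ht' : t = 1 - s := by linarith
      refine ⟨?_, ?_, ?_⟩
      · show s * v 0 + t * w 0 ≤ b
        nlinarith
      · show |s * v 1 + t * w 1| ≤ r * (b * (s * v 0 + t * w 0) + 1) / (1 + b * q)
        have : r * (b * (s * v 0 + t * w 0) + 1) / (1 + b * q) =
          s * (r * (b * v 0 + 1) / (1 + b * q)) + t * (r * (b * w 0 + 1) / (1 + b * q)) := by
          rw [ht']; ring
        rw [this]
        exact habs.trans (add_le_add (mul_le_mul_of_nonneg_left hv2 hs)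
          (mul_le_mul_of_nonneg_left hw2 ht))
      · show |s * v 1 + t * w 1| ≤ (1 + q * (s * v 0 + t * w 0)) / r
        have : (1 + q * (s * v 0 + t * w 0)) / r =
          s * ((1 + q * v 0) / r) + t * ((1 + q * w 0) / r) := by
          rw [ht']; ring
        rw [this]
        exact habs.trans (add_le_add (mul_le_mul_of_nonneg_left hv3 hs)
          (mul_le_mul_of_nonneg_left hw3 ht))
  · rintro v ⟨h1, h2, h3⟩
    set S : Set (Fin 2 → ℝ) := {![-1/b, 0], ![q, r], ![q, -r], ![b, c], ![b, -c]} with hS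
    have hconv : Convex ℝ (convexHull ℝ S) := convex_convexHull ℝ S
    have hA : ![-1/b, 0] ∈ convexHull ℝ S := subset_convexHull ℝ S (by simp [hS])
    have hB : ![q, r] ∈ convexHull ℝ S := subset_convexHull ℝ S (by simp [hS])
    have hB' : ![q, -r] ∈ convexHull ℝ S := subset_convexHull ℝ S (by simp [hS])
    have hC : ![b, c] ∈ convexHull ℝ S := subset_convexHull ℝ S (by simp [hS])
    have hC' : ![b, -c] ∈ convexHull ℝ S := subset_convexHull ℝ S (by simp [hS])
    have hU : ∀ l : ℝ, |l| ≤ 1 → ![q, l * r] ∈ convexHull ℝ S := by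
      intro l hl
      have := abs_le.1 hl
      convert hconv hB hB' (a := (1 + l) / 2) (b := (1 - l) / 2) (by linarith) (by linarith)
        (by ring) using 1
      ext i; fin_cases i <;> simp <;> ring
    have hV : ∀ l : ℝ, |l| ≤ 1 → ![b, l * c] ∈ convexHull ℝ S := by
      intro l hl
      have := abs_le.1 hl
      convert hconv hC hC' (a := (1 + l) / 2) (b := (1 - l) / 2) (by linarith) (by linarith)
        (by ring) using 1
      ext i; fin_cases i <;> simp <;> ring
    have hx0 : 0 ≤ r * (b * v 0 + 1) / (1 + b * q) := (abs_nonneg _).trans h2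
    have hx : 0 ≤ b * v 0 + 1 := by
      by_contra hneg
      push Not at hneg
      have : r * (b * v 0 + 1) / (1 + b * q) < 0 :=
        div_neg_of_neg_of_pos (mul_neg_of_pos_of_neg hr hneg) hD
      linarith
    rcases le_or_gt (v 0) q with hxq | hxq
    · rcases hx.eq_or_lt with h0 | hpos
      · rw [← h0] at h2
        have hv1 : v 1 = 0 := by simpa using h2
        have hv0 : v 0 = -1 / b := by field_simp; linarith
        have : v = ![-1/b, 0] := by
          ext i; fin_cases i <;> simp [hv0, hv1]
        rw [this]; exact hA
      · set L := r * (b * v 0 + 1) / (1 + b * q) with hL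
        have hLpos : 0 < L := by positivity
        have hl : |v 1 / L| ≤ 1 := by
          rw [abs_div, abs_of_pos hLpos, div_le_one hLpos]; exact h2
        have ht1 : (b * v 0 + 1) / (1 + b * q) ≤ 1 := by
          rw [div_le_one hD]; nlinarith
        have ht0 : 0 ≤ (b * v 0 + 1) / (1 + b * q) := by positivity
        convert hconv hA (hU _ hl) (a := 1 - (b * v 0 + 1) / (1 + b * q))
          (b := (b * v 0 + 1) / (1 + b * q)) (by linarith) ht0 (by ring) using 1
        ext i; fin_cases i
        · simp; field_simp; ring
        · simp; 
          have : (b * v 0 + 1) / (1 + b * q) = L / r := by rw [hL]; field_simp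
          rw [this]; field_simp
    · have hqb' : 0 < b - q := by linarith
      have hpos : 0 < 1 + q * v 0 := by
        rcases le_or_gt 0 q with h | h
        · nlinarith
        · nlinarith
      set L := (1 + q * v 0) / r with hL
      have hLpos : 0 < L := by positivity
      have hl : |v 1 / L| ≤ 1 := by
        rw [abs_div, abs_of_pos hLpos, div_le_one hLpos]; exact h3
      have ht1 : (v 0 - q) / (b - q) ≤ 1 := by
        rw [div_le_one hqb']; linarith
      have ht0 : 0 ≤ (v 0 - q) / (b - q) := div_nonneg (by linarith) hqb'.le
      convert hconv (hU _ hl) (hV _ hl) (a := 1 - (v 0 - q) / (b - q))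
          (b := (v 0 - q) / (b - q)) (by linarith) ht0 (by ring) using 1
      have hne : b - q ≠ 0 := hqb'.ne'
      ext i; fin_cases i
      · simp; field_simp; ring
      · simp
        have key : (1 - (v 0 - q) / (b - q)) * r + (v 0 - q) / (b - q) * c = L := by
          rw [hL, hc]; field_simp; rw [hr2]; ring
        have : (1 - (v 0 - q) / (b - q)) * (v 1 / L * r) + (v 0 - q) / (b - q) * (v 1 / L * c)
          = v 1 / L * ((1 - (v 0 - q) / (b - q)) * r + (v 0 - q) / (b - q) * c) := by ring
        rw [this, key]; field_simp

lemma aux_int (a b : ℝ) (hab : a ≤ b) (h : ℝ → ℝ) (h0 : ∀ x ∈ Set.Icc a b, 0 ≤ h x)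
    (R : Set (ℝ × ℝ)) (hR : R = {p | p.1 ∈ Set.Icc a b ∧ |p.2| ≤ h p.1}) (hc : IsCompact R) :
    (∫ p in R, p.1 = ∫ x in a..b, x * (2 * h x)) ∧ ∫ p in R, p.2 = 0 := by
  have hm : MeasurableSet R := hc.measurableSet
  have i1 : Integrable (R.indicator fun p : ℝ × ℝ => p.1) :=
    (continuous_fst.continuousOn.integrableOn_compact hc).integrable_indicator hm
  have i2 : Integrable (R.indicator fun p : ℝ × ℝ => p.2) :=
    (continuous_snd.continuousOn.integrableOn_compact hc).integrable_indicator hm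
  have key : ∀ (f : ℝ × ℝ → ℝ) (x : ℝ), ∫ y, R.indicator f (x, y) =
      (Set.Icc a b).indicator (fun x => ∫ y in (-(h x))..(h x), f (x, y)) x := by
    intro f x
    by_cases hx : x ∈ Set.Icc a b
    · rw [Set.indicator_of_mem hx, intervalIntegral.integral_of_le (by linarith [h0 x hx]),
        ← integral_Icc_eq_integral_Ioc, ← integral_indicator measurableSet_Icc]
      congr 1; ext y
      have : (x, y) ∈ R ↔ y ∈ Set.Icc (-(h x)) (h x) := by
        rw [hR]
        exact ⟨fun hh => abs_le.1 hh.2, fun hh => ⟨hx, abs_le.2 hh⟩⟩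
      by_cases hy : y ∈ Set.Icc (-(h x)) (h x)
      · rw [Set.indicator_of_mem hy, Set.indicator_of_mem (this.2 hy)]
      · rw [Set.indicator_of_notMem hy, Set.indicator_of_notMem (fun h => hy (this.1 h))]
    · rw [Set.indicator_of_notMem hx]
      have : ∀ y, R.indicator f (x, y) = 0 := fun y =>
        Set.indicator_of_notMem (fun hh => hx (by rw [hR] at hh; exact hh.1)) _
      simp [this]
  constructor
  · rw [← integral_indicator hm, Measure.volume_eq_prod, integral_prod _ i1]
    simp_rw [key]
    rw [integral_indicator measurableSet_Icc, integral_Icc_eq_integral_Ioc,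
      ← intervalIntegral.integral_of_le hab]
    congr 1; ext x
    simp; ring
  · rw [← integral_indicator hm, Measure.volume_eq_prod, integral_prod _ i2]
    simp_rw [key]
    simp

lemma aux_calc (b q r : ℝ) (hb : 0 < b) (hq1 : -1 < b * q) (hqb : q ≤ b) (hr : 0 < r)
    (hr2 : r ^ 2 = 1 + q ^ 2) :
    ∫ x in (-1/b)..b, x * (2 * min (r * (b * x + 1) / (1 + b * q)) ((1 + q * x) / r)) =
    (q ^ 3 * b - q ^ 2 * b ^ 2 - q ^ 2 + 2 * q * b ^ 5 + q * b + 3 * b ^ 4 - 1) /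
      (3 * r * b ^ 2) := by
  have hD : 0 < 1 + b * q := by linarith
  have haq : -1 / b ≤ q := by rw [div_le_iff₀ hb]; linarith
  have hcont : Continuous
      fun x => x * (2 * min (r * (b * x + 1) / (1 + b * q)) ((1 + q * x) / r)) := by fun_prop
  -- difference of the two branches
  have hdiff : ∀ x, (1 + q * x) / r - r * (b * x + 1) / (1 + b * q) =
      (q - x) * (b - q) / (r * (1 + b * q)) := by
    intro x
    have hD' : 1 + b * q ≠ 0 := hD.ne'
    rw [div_sub_div _ _ hr.ne' hD', div_left_inj' (by positivity)]
    linear_combination (-(b * x + 1)) * hr2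
  rw [← intervalIntegral.integral_add_adjacent_intervals (b := q)
    (hcont.intervalIntegrable _ _) (hcont.intervalIntegrable _ _)]
  have e1 : ∫ x in (-1/b)..q, x * (2 * min (r * (b * x + 1) / (1 + b * q)) ((1 + q * x) / r)) =
      ∫ x in (-1/b)..q, ((2 * r * b / (1 + b * q)) * x ^ 2 + (2 * r / (1 + b * q)) * x) := by
    apply intervalIntegral.integral_congr
    intro x hx
    rw [Set.uIcc_of_le haq] at hx
    have : 0 ≤ (q - x) * (b - q) / (r * (1 + b * q)) :=
      div_nonneg (mul_nonneg (by linarith [hx.2]) (by linarith)) (by positivity)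
    have := hdiff x
    simp only
    rw [min_eq_left (by linarith)]
    ring
  have e2 : ∫ x in q..b, x * (2 * min (r * (b * x + 1) / (1 + b * q)) ((1 + q * x) / r)) =
      ∫ x in q..b, ((2 * q / r) * x ^ 2 + (2 / r) * x) := by
    apply intervalIntegral.integral_congr
    intro x hx
    rw [Set.uIcc_of_le hqb] at hx
    have : 0 ≤ (x - q) * (b - q) / (r * (1 + b * q)) :=
      div_nonneg (mul_nonneg (by linarith [hx.1]) (by linarith)) (by positivity)
    have h2 := hdiff x
    have h3 : (q - x) * (b - q) / (r * (1 + b * q)) = - ((x - q) * (b - q) / (r * (1 + b * q))) := by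
      ring
    simp only
    rw [min_eq_right (by linarith)]
    ring
  have P : ∀ (α β s t : ℝ), ∫ x in s..t, (α * x ^ 2 + β * x) =
      α * ((t ^ 3 - s ^ 3) / 3) + β * ((t ^ 2 - s ^ 2) / 2) := by
    intro α β s t
    rw [intervalIntegral.integral_add (by apply Continuous.intervalIntegrable; fun_prop)
      (by apply Continuous.intervalIntegrable; fun_prop)]
    rw [intervalIntegral.integral_const_mul, intervalIntegral.integral_const_mul, integral_pow,
      integral_id]
    norm_num
  rw [e1, e2, P, P]
  have e3 : 2 * r * b / (1 + b * q) * ((q ^ 3 - (-1 / b) ^ 3) / 3) +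
      2 * r / (1 + b * q) * ((q ^ 2 - (-1 / b) ^ 2) / 2) =
      r ^ 2 * (b * q + 1) * (2 * q * b - 1) / (3 * b ^ 2 * r) := by
    field_simp; ring
  rw [e3, hr2]
  field_simp
  ring

theorem stmt13 (b q : ℝ) (hb : 0 < b) (hq : q ∈ Set.Ioc (-1/b) b) :
    bary (pent q b) = 0 ↔
      q ^ 3 * b - q ^ 2 * b ^ 2 - q ^ 2 + 2 * q * b ^ 5 + q * b + 3 * b ^ 4 = 1 := by
  obtain ⟨hq1, hqb⟩ := hq
  have hbq : -1 < b * q := by rw [div_lt_iff₀ hb] at hq1; linarith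
  have hD : 0 < 1 + b * q := by linarith
  have hab : -1 / b ≤ b := hq1.le.trans hqb
  set r := Real.sqrt (1 + q ^ 2) with hrdef
  have hr : 0 < r := Real.sqrt_pos.2 (by positivity)
  have hr2 : r ^ 2 = 1 + q ^ 2 := Real.sq_sqrt (by positivity)
  have hpent : pent q b = {v : Fin 2 → ℝ | v 0 ≤ b ∧
      |v 1| ≤ r * (b * v 0 + 1) / (1 + b * q) ∧ |v 1| ≤ (1 + q * v 0) / r} :=
    aux_hull b q r _ hb hbq hqb hr hr2 rfl
  have hcomp : IsCompact (pent q b) := by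
    unfold pent
    exact Set.Finite.isCompact_convexHull ℝ (Set.toFinite _)
  have hfin : volume (pent q b) ≠ ⊤ := hcomp.measure_lt_top.ne
  have hpos : volume (pent q b) ≠ 0 := by
    have hopen : IsOpen {v : Fin 2 → ℝ | v 0 < b ∧
        |v 1| < r * (b * v 0 + 1) / (1 + b * q) ∧ |v 1| < (1 + q * v 0) / r} := by
      have o1 : IsOpen {v : Fin 2 → ℝ | v 0 < b} := isOpen_lt (by fun_prop) (by fun_prop)
      have o2 : IsOpen {v : Fin 2 → ℝ | |v 1| < r * (b * v 0 + 1) / (1 + b * q)} :=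
        isOpen_lt (by fun_prop) (by fun_prop)
      have o3 : IsOpen {v : Fin 2 → ℝ | |v 1| < (1 + q * v 0) / r} :=
        isOpen_lt (by fun_prop) (by fun_prop)
      exact o1.inter (o2.inter o3)
    have hne : Set.Nonempty {v : Fin 2 → ℝ | v 0 < b ∧
        |v 1| < r * (b * v 0 + 1) / (1 + b * q) ∧ |v 1| < (1 + q * v 0) / r} := by
      refine ⟨0, ?_⟩
      simp only [Set.mem_ofPred_eq, Pi.zero_apply, abs_zero, mul_zero, zero_add, add_zero]
      exact ⟨hb, by positivity, by positivity⟩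
    refine ((hopen.measure_pos volume hne).trans_le (measure_mono ?_)).ne'
    rw [hpent]
    exact fun v hv => ⟨hv.1.le, hv.2.1.le, hv.2.2.le⟩
  have hvol : (volume (pent q b)).toReal⁻¹ ≠ 0 :=
    inv_ne_zero (ENNReal.toReal_ne_zero.2 ⟨hpos, hfin⟩)
  -- transfer to the product
  set h : ℝ → ℝ := fun x => min (r * (b * x + 1) / (1 + b * q)) ((1 + q * x) / r) with hh
  set R : Set (ℝ × ℝ) := {p | p.1 ∈ Set.Icc (-1/b) b ∧ |p.2| ≤ h p.1} with hR
  have hpre : pent q b = (MeasurableEquiv.finTwoArrow (α := ℝ)) ⁻¹' R := by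
    rw [hpent]
    ext v
    show _ ↔ v 0 ∈ Set.Icc (-1/b) b ∧ |v 1| ≤ h (v 0)
    simp only [Set.mem_ofPred_eq, hh, le_min_iff, Set.mem_Icc]
    constructor
    · rintro ⟨h1, h2, h3⟩
      refine ⟨⟨?_, h1⟩, h2, h3⟩
      have h4 := (abs_nonneg _).trans h2
      by_contra hneg
      push Not at hneg
      rw [lt_div_iff₀ hb] at hneg
      have : r * (b * v 0 + 1) / (1 + b * q) < 0 :=
        div_neg_of_neg_of_pos (mul_neg_of_pos_of_neg hr (by linarith)) hD
      linarith
    · rintro ⟨⟨_, h1⟩, h2, h3⟩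
      exact ⟨h1, h2, h3⟩
  have hRc : IsCompact R := by
    have : R = (fun v : Fin 2 → ℝ => (v 0, v 1)) '' pent q b := by
      rw [hpre]
      exact (Set.image_preimage_eq R (MeasurableEquiv.finTwoArrow (α := ℝ)).surjective).symm
    rw [this]
    exact hcomp.image (by fun_prop)
  have h0 : ∀ x ∈ Set.Icc (-1/b) b, 0 ≤ h x := by
    intro x hx
    have hx1 := hx.1
    rw [div_le_iff₀ hb] at hx1
    refine le_min (div_nonneg (mul_nonneg hr.le (by linarith)) hD.le) (div_nonneg ?_ hr.le)
    rcases le_or_gt 0 q with hq0 | hq0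
    · have : q * (b * x + 1) ≥ 0 := mul_nonneg hq0 (by linarith)
      by_contra hneg
      push Not at hneg
      nlinarith
    · nlinarith [hx.2]
  obtain ⟨I1, I2⟩ := aux_int (-1/b) b hab h h0 R hR hRc
  have hmp := volume_preserving_finTwoArrow ℝ
  have J1 : ∫ v in pent q b, v 0 = ∫ p in R, p.1 := by
    rw [hpre]
    exact hmp.setIntegral_preimage_emb (MeasurableEquiv.measurableEmbedding _) (fun p => p.1) R
  have J2 : ∫ v in pent q b, v 1 = ∫ p in R, p.2 := by
    rw [hpre]
    exact hmp.setIntegral_preimage_emb (MeasurableEquiv.measurableEmbedding _) (fun p => p.2) R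
  have hint : ∀ i : Fin 2, Integrable (fun v : Fin 2 → ℝ => v i) (volume.restrict (pent q b)) :=
    fun i => (continuous_apply i).continuousOn.integrableOn_compact hcomp
  have K : ∀ i : Fin 2, (∫ v in pent q b, v) i = ∫ v in pent q b, v i := fun i =>
    eval_integral hint i
  have hcalc := aux_calc b q r hb hbq hqb hr hr2
  unfold bary
  rw [smul_eq_zero_iff_right hvol, funext_iff, Fin.forall_fin_two, K, K, J1, J2, I1, I2, hcalc]
  simp only [Pi.zero_apply, and_true]
  rw [div_eq_zero_iff, or_iff_left (by positivity), sub_eq_zero]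
end
end

section
/- Let b > 0 and q ∈ (−1/b, b] satisfy f(q,b) = q³b − q²b² − q² + 2qb⁵ + qb + 3b⁴ = 1, and let P = P_{q,b} be the pentagon given by the convex hull of (−1/b, 0), (q, ±r), (b, ±c), with r = √(1+q²), c = (1+bq)/√(1+q²). Then both G_P = 0 and G_{P°} = 0; consequently (0,0) is a critical point of the function F_P(x,ξ) = vp((P°+ξ)° + x). -/
open MeasureTheory

noncomputable section

/-- The functional `F_K(x, ξ) = vp((K° + ξ)° + x)`. -/
def FK (K : Set (Fin 2 → ℝ)) (p : (Fin 2 → ℝ) × (Fin 2 → ℝ)) : ℝ :=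
  vp ((fun y => y + p.1) '' polarBody ((fun y => y + p.2) '' polarBody K))


lemma polar_anti {A B : Set (Fin 2 → ℝ)} (h : A ⊆ B) : polarBody B ⊆ polarBody A :=
  fun _ hy x hx => hy x (h hx)

lemma sub_bipolar (A : Set (Fin 2 → ℝ)) : A ⊆ polarBody (polarBody A) := by
  intro x hx y hy
  have := hy x hx
  linarith [mul_comm (x 0) (y 0), mul_comm (x 1) (y 1)]

lemma polar_neg (A : Set (Fin 2 → ℝ)) : polarBody (-A) = -polarBody A := by
  ext y
  constructor
  · intro h x hx
    have := h (-x) (by simpa using hx)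
    simp at this ⊢
    linarith
  · intro h x hx
    have := h (-x) hx
    simp at this ⊢
    linarith

/-- sup-norm box -/
def box (d : ℝ) : Set (Fin 2 → ℝ) := {y | |y 0| ≤ d ∧ |y 1| ≤ d}

lemma polar_box {A : Set (Fin 2 → ℝ)} {d : ℝ} (hd : 0 < d) (h : box d ⊆ A) :
    polarBody A ⊆ box (1 / d) := by
  intro y hy
  have h1 := hy ![d, 0] (h (by simp [box, abs_of_pos hd, hd.le]))
  have h2 := hy ![-d, 0] (h (by simp [box, abs_of_pos hd, hd.le]))
  have h3 := hy ![0, d] (h (by simp [box, abs_of_pos hd, hd.le]))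
  have h4 := hy ![0, -d] (h (by simp [box, abs_of_pos hd, hd.le]))
  simp at h1 h2 h3 h4
  refine ⟨abs_le.2 ⟨?_, ?_⟩, abs_le.2 ⟨?_, ?_⟩⟩ <;>
  first
  | (rw [le_div_iff₀ hd]; linarith)
  | (rw [← neg_div, div_le_iff₀ hd]; linarith)

lemma box_polar {A : Set (Fin 2 → ℝ)} {M : ℝ} (hM : 0 < M) (h : A ⊆ box M) :
    box (1 / (2 * M)) ⊆ polarBody A := by
  intro y hy x hx
  obtain ⟨h0, h1⟩ := h hx
  obtain ⟨g0, g1⟩ := hy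
  have e0 : x 0 * y 0 ≤ M * (1 / (2 * M)) := by
    refine (le_abs_self _).trans ?_
    rw [abs_mul]; gcongr
  have e1 : x 1 * y 1 ≤ M * (1 / (2 * M)) := by
    refine (le_abs_self _).trans ?_
    rw [abs_mul]; gcongr
  have : M * (1 / (2 * M)) = 1 / 2 := by field_simp
  linarith

lemma vol_box_lt {A : Set (Fin 2 → ℝ)} {M : ℝ} (h : A ⊆ box M) : volume A ≠ ⊤ := by
  have : A ⊆ Set.Icc (fun _ => -M) (fun _ => M) := by
    intro x hx
    obtain ⟨h0, h1⟩ := h hx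
    rw [abs_le] at h0 h1
    constructor <;> intro i <;> fin_cases i <;> simp [h0, h1]
  exact ((measure_mono this).trans_lt isCompact_Icc.measure_lt_top).ne

lemma vol_translate (A : Set (Fin 2 → ℝ)) (x : Fin 2 → ℝ) :
    volume ((fun y => y + x) '' A) = volume A := by
  rw [Set.image_add_right]
  exact measure_preimage_add_right _ _ _

lemma key_bound {s : ℝ} (h : |s| ≤ 1 / 4) : 1 - 3 * s ≤ |((1 + s)⁻¹) ^ 3| := by
  rw [abs_le] at h
  have hp : 0 < 1 + s := by linarith
  rw [abs_of_pos (by positivity), inv_pow, ← one_div, le_div_iff₀ (by positivity)]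
  have : 0 ≤ s ^ 2 * (6 + 8 * s + 3 * s ^ 2) := by
    apply mul_nonneg (sq_nonneg _); nlinarith [sq_nonneg s]
  nlinarith

/-- linear functional -/
def lin (x : Fin 2 → ℝ) : (Fin 2 → ℝ) →L[ℝ] ℝ :=
  x 0 • ContinuousLinearMap.proj 0 + x 1 • ContinuousLinearMap.proj 1

lemma lin_apply (x y : Fin 2 → ℝ) : lin x y = x 0 * y 0 + x 1 * y 1 := by
  simp [lin]

/-- derivative of the projective map -/
def dphi (x y : Fin 2 → ℝ) : (Fin 2 → ℝ) →L[ℝ] (Fin 2 → ℝ) :=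
  (1 + lin x y)⁻¹ • ContinuousLinearMap.id ℝ _ +
    ((-((1 + lin x y) ^ 2)⁻¹) • lin x).smulRight y

lemma dphi_det (x y : Fin 2 → ℝ) (h : 1 + lin x y ≠ 0) :
    (dphi x y).det = ((1 + lin x y)⁻¹) ^ 3 := by
  rw [ContinuousLinearMap.det, ← LinearMap.det_toMatrix', Matrix.det_fin_two]
  simp only [LinearMap.toMatrix'_apply]
  simp [dphi]
  have e := lin_apply x y
  simp only [lin_apply] at *
  simp
  field_simp
  ring

lemma dphi_has (x y : Fin 2 → ℝ) (h : 1 + lin x y ≠ 0) :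
    HasFDerivAt (fun y => (1 + lin x y)⁻¹ • y) (dphi x y) y := by
  have h1 : HasFDerivAt (fun y => 1 + lin x y) (lin x) y := by
    simpa using ((lin x).hasFDerivAt (x := y)).const_add 1
  have h2 := (hasDerivAt_inv h).comp_hasFDerivAt y h1
  exact h2.smul (hasFDerivAt_id y)

lemma santalo {K : Set (Fin 2 → ℝ)} {M : ℝ} (hM : 0 < M)
    (hm : MeasurableSet (polarBody K)) (hb : polarBody K ⊆ box M)
    (h0 : ∫ y in polarBody K, y = 0) (x : Fin 2 → ℝ) (hx : x ∈ box (1 / (8 * M))) :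
    volume (polarBody K) ≤ volume (polarBody ((fun y => y + x) '' K)) := by
  set L := polarBody K with hL
  have hs : ∀ y ∈ L, |lin x y| ≤ 1 / 4 := by
    intro y hy
    obtain ⟨a, b⟩ := hb hy
    obtain ⟨c, d⟩ := hx
    rw [lin_apply]
    calc |x 0 * y 0 + x 1 * y 1| ≤ |x 0| * |y 0| + |x 1| * |y 1| := by
          rw [← abs_mul, ← abs_mul]; exact abs_add_le _ _
      _ ≤ 1 / (8 * M) * M + 1 / (8 * M) * M := by gcongr
      _ = 1 / 4 := by field_simp; norm_num
  have hpos : ∀ y ∈ L, 0 < 1 + lin x y := by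
    intro y hy
    have := abs_le.1 (hs y hy)
    linarith
  have hvol : volume L ≠ ⊤ := vol_box_lt hb
  have hinj : Set.InjOn (fun y => (1 + lin x y)⁻¹ • y) L := by
    intro y hy z hz h
    have p1 := hpos y hy
    have p2 := hpos z hz
    simp only at h
    have h' := congrArg (lin x) h
    simp only [map_smul, smul_eq_mul] at h'
    have : lin x y = lin x z := by
      field_simp at h'
      linarith
    rw [this] at h
    exact smul_right_injective _ (inv_ne_zero p2.ne') h
  have himg := lintegral_abs_det_fderiv_eq_addHaar_image volume hm
    (fun y hy => (dphi_has x y (hpos y hy).ne').hasFDerivWithinAt) hinj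
  have hsub : (fun y => (1 + lin x y)⁻¹ • y) '' L ⊆ polarBody ((fun y => y + x) '' K) := by
    rintro _ ⟨y, hy, rfl⟩ _ ⟨p, hp, rfl⟩
    have h1 := hy p hp
    have h2 := hpos y hy
    have e := lin_apply x y
    simp only [Pi.add_apply, Pi.smul_apply, smul_eq_mul]
    have : (p 0 + x 0) * ((1 + lin x y)⁻¹ * y 0) + (p 1 + x 1) * ((1 + lin x y)⁻¹ * y 1)
      = (p 0 * y 0 + p 1 * y 1 + lin x y) / (1 + lin x y) := by
      rw [e] at *; field_simp; ring
    rw [this, div_le_one h2]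
    linarith
  refine le_trans ?_ (measure_mono hsub)
  rw [← himg]
  have hid : IntegrableOn (fun y : Fin 2 → ℝ => y) L := by
    refine Measure.integrableOn_of_bounded (M := M) hvol aestronglyMeasurable_id ?_
    filter_upwards [ae_restrict_mem hm] with y hy
    rw [pi_norm_le_iff_of_nonneg hM.le]
    intro i
    obtain ⟨a, b⟩ := hb hy
    fin_cases i <;> simpa
  have hlin : IntegrableOn (fun y : Fin 2 → ℝ => lin x y) L := (lin x).integrable_comp hid
  have hlin0 : ∫ y in L, lin x y = 0 := by
    rw [(lin x).integral_comp_comm hid, h0, map_zero]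
  have hc : IntegrableOn (fun _ : Fin 2 → ℝ => (1:ℝ)) L := integrableOn_const hvol
  have hint : ∫ y in L, (1 - 3 * lin x y) = (volume L).toReal := by
    rw [integral_sub hc (hlin.const_mul 3), integral_const_mul, hlin0]
    simp [Measure.real]
  calc volume L = ENNReal.ofReal (∫ y in L, (1 - 3 * lin x y)) := by
        rw [hint, ENNReal.ofReal_toReal hvol]
    _ = ∫⁻ y in L, ENNReal.ofReal (1 - 3 * lin x y) := by
        apply ofReal_integral_eq_lintegral_ofReal (hc.sub (hlin.const_mul 3))
        filter_upwards [ae_restrict_mem hm] with y hy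
        have := abs_le.1 (hs y hy)
        simp; linarith
    _ ≤ _ := by
        apply setLIntegral_mono' hm
        intro y hy
        apply ENNReal.ofReal_le_ofReal
        rw [dphi_det _ _ (hpos y hy).ne']
        exact key_bound (hs y hy)

lemma box_nhds {d : ℝ} (hd : 0 < d) : box d ∈ nhds (0 : Fin 2 → ℝ) := by
  refine Filter.mem_of_superset (Metric.closedBall_mem_nhds 0 hd) ?_
  intro y hy
  rw [mem_closedBall_zero_iff, pi_norm_le_iff_of_nonneg hd.le] at hy
  exact ⟨hy 0, hy 1⟩

lemma box_translate {A : Set (Fin 2 → ℝ)} {d : ℝ} (h : box d ⊆ A) {x : Fin 2 → ℝ}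
    (hx : x ∈ box (d / 2)) : box (d / 2) ⊆ (fun y => y + x) '' A := by
  intro y hy
  refine ⟨y - x, h ?_, by simp⟩
  obtain ⟨a, b⟩ := hx
  obtain ⟨c, e⟩ := hy
  constructor
  · have := abs_sub (y 0) (x 0); simp; linarith
  · have := abs_sub (y 1) (x 1); simp; linarith

lemma translate_box {A : Set (Fin 2 → ℝ)} {M d : ℝ} (h : A ⊆ box M) {x : Fin 2 → ℝ}
    (hx : x ∈ box d) : (fun y => y + x) '' A ⊆ box (M + d) := by
  rintro _ ⟨y, hy, rfl⟩
  obtain ⟨a, b⟩ := hx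
  obtain ⟨c, e⟩ := h hy
  constructor
  · have := abs_add_le (y 0) (x 0); simp; linarith
  · have := abs_add_le (y 1) (x 1); simp; linarith

lemma vol_neg (A : Set (Fin 2 → ℝ)) : volume (-A) = volume A := by
  simpa using Measure.addHaar_smul volume (-1:ℝ) A

lemma crit {K : Set (Fin 2 → ℝ)} {M d : ℝ} (hM : 0 < M) (hd : 0 < d)
    (hm : MeasurableSet K) (hK : K ⊆ box M) (hK' : box d ⊆ K) (hp : polarBody K = -K)
    (h0 : ∫ y in -K, y = 0) : fderiv ℝ (FK K) (0, 0) = 0 := by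
  have hbb : polarBody (-K) = K := by rw [polar_neg, hp, neg_neg]
  have hsymm : ∀ {e : ℝ} {A : Set (Fin 2 → ℝ)}, A ⊆ box e → -A ⊆ box e := by
    intro e A h y hy
    have := h hy
    simpa [box] using this
  have hsymm' : ∀ {e : ℝ} {A : Set (Fin 2 → ℝ)}, box e ⊆ A → box e ⊆ -A := by
    intro e A h y hy
    apply h
    simpa [box] using hy
  have hs : ∀ x ∈ box (1 / (8 * M)), volume K ≤ volume (polarBody ((fun y => y + x) '' K)) := by
    intro x hx
    have := santalo (K := K) hM (by rw [hp]; exact hm.neg) (by rw [hp]; exact hsymm hK)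
      (by rw [hp]; exact h0) x hx
    rwa [hp, vol_neg] at this
  have hF0 : FK K (0, 0) = (volume K).toReal * (volume K).toReal := by
    simp [FK, vp, hp, hbb, vol_neg]
  set e := min (1 / (8 * M)) (d / 2) with he
  have hepos : 0 < e := by rw [he]; positivity
  have hmono : ∀ {a c : ℝ}, a ≤ c → box a ⊆ box c := fun h y hy => ⟨hy.1.trans h, hy.2.trans h⟩
  have hfin : ∀ x ∈ box e, volume (polarBody ((fun y => y + x) '' K)) ≠ ⊤ := by
    intro x hx
    exact vol_box_lt (polar_box (by positivity) (box_translate hK' (hmono (min_le_right _ _) hx)))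
  have hloc1 : IsLocalMin (fun x => FK K (x, 0)) 0 := by
    filter_upwards [box_nhds hepos] with x hx
    rw [show ((0, 0) : (Fin 2 → ℝ) × (Fin 2 → ℝ)) = (0, 0) from rfl, hF0]
    have : FK K (x, 0) = (volume K).toReal *
        (volume (polarBody ((fun y => y + x) '' K))).toReal := by
      simp only [FK, vp, hp, vol_translate]
      simp [hbb]
    rw [this]
    exact mul_le_mul_of_nonneg_left (ENNReal.toReal_mono (hfin x hx)
      (hs x (hmono (min_le_left _ _) hx))) ENNReal.toReal_nonneg
  have hloc2 : IsLocalMin (fun x => FK K (0, x)) 0 := by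
    filter_upwards [box_nhds hepos] with x hx
    rw [hF0]
    have hx' : -x ∈ box e := by simpa [box] using hx
    have e1 : (fun y => y + x) '' (-K) = -((fun y => y + -x) '' K) := by
      ext y
      simp only [Set.image_add_right, Set.mem_preimage, Set.mem_neg]
      constructor <;> intro h <;> convert h using 1 <;> abel
    have e2 : volume (polarBody ((fun y => y + x) '' (-K)))
        = volume (polarBody ((fun y => y + -x) '' K)) := by
      rw [e1, polar_neg, vol_neg]
    have : FK K (0, x) = (volume (polarBody ((fun y => y + -x) '' K))).toReal *
        (volume (polarBody (polarBody ((fun y => y + x) '' (-K))))).toReal := by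
      simp only [FK, vp, hp, vol_translate, e2]
      simp
    rw [this]
    have hfin2 : volume (polarBody (polarBody ((fun y => y + x) '' (-K)))) ≠ ⊤ := by
      have h1 := translate_box (hsymm hK) hx
      exact vol_box_lt (polar_box (by positivity) (box_polar (by positivity) h1))
    refine mul_le_mul (ENNReal.toReal_mono (hfin _ hx') (hs _ (hmono (min_le_left _ _) hx')))
      (ENNReal.toReal_mono hfin2 ?_) ENNReal.toReal_nonneg ENNReal.toReal_nonneg
    · calc volume K = volume ((fun y => y + x) '' (-K)) := by rw [vol_translate, vol_neg]
        _ ≤ _ := measure_mono (sub_bipolar _)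
  by_cases hdf : DifferentiableAt ℝ (FK K) (0, 0)
  · have hD := hdf.hasFDerivAt
    have c1 := (HasFDerivAt.comp (0 : Fin 2 → ℝ) (f := fun x => (x, (0 : Fin 2 → ℝ))) hD
      (hasFDerivAt_prodMk_left 0 0))
    have c2 := (HasFDerivAt.comp (0 : Fin 2 → ℝ) (f := fun x => ((0 : Fin 2 → ℝ), x)) hD
      (hasFDerivAt_prodMk_right 0 0))
    have z1 := hloc1.hasFDerivAt_eq_zero c1
    have z2 := hloc2.hasFDerivAt_eq_zero c2
    ext v
    · exact congrArg (fun f => f v) z1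
    · exact congrArg (fun f => f v) z2
  · exact fderiv_zero_of_not_differentiableAt hdf

/-- inequality description, with `r`, `c` generic -/
def QQ (q b r c : ℝ) : Set (Fin 2 → ℝ) :=
  {y | y 0 ≤ b ∧ c * |y 1| ≤ 1 + b * y 0 ∧ r * |y 1| ≤ 1 + q * y 0}

lemma polar_hull (S : Set (Fin 2 → ℝ)) : polarBody (convexHull ℝ S) = polarBody S := by
  apply Set.Subset.antisymm (polar_anti (subset_convexHull ℝ S))
  intro y hy x hx
  have : convexHull ℝ S ⊆ {z | z 0 * y 0 + z 1 * y 1 ≤ 1} := by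
    refine convexHull_min (fun z hz => hy z hz) ?_
    have : {z : Fin 2 → ℝ | z 0 * y 0 + z 1 * y 1 ≤ 1} = {z | lin y z ≤ 1} := by
      ext z; simp [lin_apply, mul_comm]
    rw [this]
    exact convex_halfSpace_le (lin y).toLinearMap.isLinear 1
  exact this hx

/-- vertices -/
def VV (q b r c : ℝ) : Set (Fin 2 → ℝ) :=
  {![-1/b, 0], ![q, r], ![q, -r], ![b, c], ![b, -c]}

lemma abs_mul_le_iff {r y t : ℝ} (hr : 0 < r) : r * |y| ≤ t ↔ r * y ≤ t ∧ r * (-y) ≤ t := by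
  rw [abs_eq_max_neg, mul_max_of_nonneg _ _ hr.le, max_le_iff]

lemma polar_VV {q b r c : ℝ} (hb : 0 < b) (hr : 0 < r) (hc : 0 < c) :
    polarBody (VV q b r c) = -QQ q b r c := by
  ext y
  simp only [polarBody, VV, QQ, Set.mem_neg, Set.mem_setOf_eq, abs_mul_le_iff hr,
    abs_mul_le_iff hc]
  simp
  have h1 : -1 / b * y 0 ≤ 1 ↔ -y 0 ≤ b := by
    rw [div_mul_eq_mul_div, div_le_one hb]; simp
  rw [h1]
  constructor
  · rintro ⟨a, b, c, d, e⟩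
    refine ⟨a, ⟨?_, ?_⟩, ?_, ?_⟩ <;> linarith
  · rintro ⟨a, ⟨b, c⟩, d, e⟩
    refine ⟨a, ?_, ?_, ?_, ?_⟩ <;> linarith

lemma QQ_convex {q b r c : ℝ} (hb : 0 < b) (hr : 0 < r) (hc : 0 < c) :
    Convex ℝ (QQ q b r c) := by
  intro x ⟨h1, h2, h3⟩ y ⟨g1, g2, g3⟩ s t hs ht hst
  have ha : |s * x 1 + t * y 1| ≤ s * |x 1| + t * |y 1| := by
    refine (abs_add_le _ _).trans ?_
    rw [abs_mul, abs_mul, abs_of_nonneg hs, abs_of_nonneg ht]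
  obtain rfl : t = 1 - s := by linarith
  simp only [QQ, Set.mem_setOf_eq, Pi.add_apply, Pi.smul_apply, smul_eq_mul]
  refine ⟨?_, ?_, ?_⟩
  · nlinarith
  · have := mul_le_mul_of_nonneg_left ha hc.le
    nlinarith [mul_le_mul_of_nonneg_left h2 hs, mul_le_mul_of_nonneg_left g2 ht]
  · have := mul_le_mul_of_nonneg_left ha hr.le
    nlinarith [mul_le_mul_of_nonneg_left h3 hs, mul_le_mul_of_nonneg_left g3 ht]

lemma vseg {S : Set (Fin 2 → ℝ)} (hS : Convex ℝ S) {x h : ℝ} (h1 : ![x, h] ∈ S)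
    (h2 : ![x, -h] ∈ S) {y : ℝ} (hy : |y| ≤ h) : ![x, y] ∈ S := by
  rcases (abs_nonneg y).trans hy |>.eq_or_lt with h0 | h0
  · subst h0
    have : y = 0 := by simpa using hy
    rwa [this]
  · rw [abs_le] at hy
    have := hS h1 h2 (a := (h + y) / (2 * h)) (b := (h - y) / (2 * h))
      (div_nonneg (by linarith) (by linarith)) (div_nonneg (by linarith) (by linarith))
      (by field_simp; ring)
    convert this using 1
    ext i
    fin_cases i <;> simp <;> field_simp <;> ring

lemma lseg {S : Set (Fin 2 → ℝ)} (hS : Convex ℝ S) {x0 y0 x1 y1 x : ℝ} (h1 : ![x0, y0] ∈ S)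
    (h2 : ![x1, y1] ∈ S) (hlt : x0 < x1) (hx0 : x0 ≤ x) (hx1 : x ≤ x1) {y : ℝ}
    (hy : y * (x1 - x0) = y0 * (x1 - x) + y1 * (x - x0)) : ![x, y] ∈ S := by
  have hp : 0 < x1 - x0 := by linarith
  have := hS h1 h2 (a := (x1 - x) / (x1 - x0)) (b := (x - x0) / (x1 - x0))
    (div_nonneg (by linarith) (by linarith)) (div_nonneg (by linarith) (by linarith))
    (by field_simp; ring)
  convert this using 1
  ext i
  fin_cases i
  · simp; field_simp; ring
  · simp; field_simp; linarith

lemma hull_eq {q b r c : ℝ} (hb : 0 < b) (hr : 0 < r) (hc : 0 < c) (hqb : q ≤ b)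
    (hq : 0 < 1 + b * q) (hr2 : r * r = 1 + q * q) (hrc : c * r = 1 + b * q) :
    convexHull ℝ (VV q b r c) = QQ q b r c := by
  apply Set.Subset.antisymm
  · refine convexHull_min ?_ (QQ_convex hb hr hc)
    have hcr : c * c ≤ 1 + b * b := by
      have h1 : (c * c) * (r * r) ≤ (1 + b * b) * (r * r) := by
        have : (c * c) * (r * r) = (1 + b * q) ^ 2 := by rw [← hrc]; ring
        rw [this, hr2]; nlinarith [sq_nonneg (b - q)]
      exact le_of_mul_le_mul_right h1 (by positivity)
    have hneg : -1 / b ≤ b := by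
      have : -1 / b < 0 := div_neg_of_neg_of_pos (by norm_num) hb
      linarith
    have h5 : 0 ≤ 1 + q * (-1 / b) := by
      have : 1 + q * (-1 / b) = (b - q) / b := by field_simp; ring
      rw [this]; exact div_nonneg (by linarith) hb.le
    have h6 : 0 ≤ 1 + b * (-1 / b) := by
      have : 1 + b * (-1 / b) = 0 := by field_simp; ring
      rw [this]
    intro x hx
    simp only [VV, Set.mem_insert_iff, Set.mem_singleton_iff] at hx
    rcases hx with rfl | rfl | rfl | rfl | rfl <;>
      simp [QQ, abs_of_pos hr, abs_of_pos hc] <;> refine ⟨?_, ?_⟩ <;>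
      first | assumption | (refine ⟨?_, ?_⟩ <;> linarith) | linarith
  · intro y ⟨h1, h2, h3⟩
    set S := convexHull ℝ (VV q b r c) with hSdef
    have hS : Convex ℝ S := convex_convexHull _ _
    have hsub : VV q b r c ⊆ S := subset_convexHull _ _
    have v0 : ![-1/b, 0] ∈ S := hsub (by simp [VV])
    have v1 : ![q, r] ∈ S := hsub (by simp [VV])
    have v2 : ![q, -r] ∈ S := hsub (by simp [VV])
    have v3 : ![b, c] ∈ S := hsub (by simp [VV])
    have v4 : ![b, -c] ∈ S := hsub (by simp [VV])
    have hlow : 0 ≤ 1 + b * y 0 := le_trans (by positivity) h2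
    have hlow' : -1 / b ≤ y 0 := by rw [div_le_iff₀ hb]; linarith
    have hlq : -1 / b < q := by rw [div_lt_iff₀ hb]; linarith
    have hy : y = ![y 0, y 1] := by ext i; fin_cases i <;> rfl
    rw [hy]
    rcases le_or_gt (y 0) q with hle | hgt
    · have e1 : ((1 + b * y 0) / c) * (q - -1 / b) = r * (y 0 - -1 / b) := by
        field_simp
        linear_combination (1 + b * y 0) * (-hrc)
      apply vseg hS (h := (1 + b * y 0) / c)
      · exact lseg hS v0 v1 hlq hlow' hle (by linarith)
      · exact lseg hS v0 v2 hlq hlow' hle (by linarith)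
      · rw [le_div_iff₀ hc]; linarith
    · have e1 : ((1 + q * y 0) / r) * (b - q) = r * (b - y 0) + c * (y 0 - q) := by
        field_simp
        linear_combination (y 0 - b) * hr2 + (q - y 0) * hrc
      have hlt : q < b := by linarith
      apply vseg hS (h := (1 + q * y 0) / r)
      · exact lseg hS v1 v3 hlt hgt.le h1 (by linarith)
      · exact lseg hS v2 v4 hlt hgt.le h1 (by linarith)
      · rw [le_div_iff₀ hr]; linarith

lemma QQ_meas (q b r c : ℝ) : MeasurableSet (QQ q b r c) := by
  have : IsClosed (QQ q b r c) := by
    refine IsClosed.and ?_ (IsClosed.and ?_ ?_)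
    · exact isClosed_le (by fun_prop) (by fun_prop)
    · exact isClosed_le (by fun_prop) (by fun_prop)
    · exact isClosed_le (by fun_prop) (by fun_prop)
  exact this.measurableSet

lemma QQ_sub {q b r c : ℝ} (hb : 0 < b) (hc : 0 < c) :
    QQ q b r c ⊆ box (b + 1 / b + (1 + b * b) / c) := by
  rintro y ⟨h1, h2, -⟩
  have h3 : 0 ≤ 1 + b * y 0 := le_trans (by positivity) h2
  have hlow' : -(1 / b) ≤ y 0 := by rw [← neg_div, div_le_iff₀ hb]; linarith
  have p1 : 0 < 1 / b := by positivity
  have p2 : 0 < (1 + b * b) / c := by positivity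
  constructor
  · rw [abs_le]; constructor <;> linarith
  · have : |y 1| ≤ (1 + b * b) / c := by
      rw [le_div_iff₀ hc]; nlinarith
    linarith

lemma box_sub_QQ {q b r c : ℝ} (hb : 0 < b) (hr : 0 < r) (hc : 0 < c) :
    ∃ d, 0 < d ∧ box d ⊆ QQ q b r c := by
  have hnn : 0 < b + c + r + |q| + 1 / b := by positivity
  refine ⟨1 / (b + c + r + |q| + 1 / b), by positivity, ?_⟩
  set N := b + c + r + |q| + 1 / b with hN
  rintro y ⟨h0, h1⟩
  rw [le_div_iff₀ hnn] at h0 h1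
  have p1 : 0 < 1 / b := by positivity
  have a0 := abs_nonneg (y 0)
  have a1 := abs_nonneg (y 1)
  have aq := abs_nonneg q
  have key : ∀ u v : ℝ, 0 ≤ u → 0 ≤ v → u + v ≤ N → u * |y 0| + v * |y 1| ≤ 1 := by
    intro u v hu hv huv
    rcases le_total (|y 0|) (|y 1|) with h | h <;> nlinarith
  refine ⟨?_, ?_, ?_⟩
  · have := key (1 / b) 0 p1.le le_rfl (by linarith)
    have h2 : |y 0| ≤ b := by
      have : |y 0| / b ≤ 1 := by rw [div_eq_mul_one_div, mul_comm]; linarith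
      rwa [div_le_one hb] at this
    exact (le_abs_self _).trans h2
  · have := key b c hb.le hc.le (by linarith)
    nlinarith [neg_abs_le (y 0)]
  · have := key (|q|) r aq hr.le (by linarith)
    have h3 := neg_abs_le (q * y 0)
    rw [abs_mul] at h3
    linarith

/-- height -/
def hh (q b r c x : ℝ) : ℝ := min ((1 + b * x) / c) ((1 + q * x) / r)

lemma comp_aux {q b r c x : ℝ} (hr : 0 < r) (hr2 : r * r = 1 + q * q) (hrc : c * r = 1 + b * q) :
    r * (r * (1 + b * x) - c * (1 + q * x)) = (b - q) * (x - q) := by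
  linear_combination (1 + b * x) * hr2 - (1 + q * x) * hrc

lemma hh_left {q b r c x : ℝ} (hr : 0 < r) (hc : 0 < c) (hqb : q ≤ b)
    (hr2 : r * r = 1 + q * q) (hrc : c * r = 1 + b * q) (hx : x ≤ q) :
    hh q b r c x = (1 + b * x) / c := by
  apply min_eq_left
  rw [div_le_div_iff₀ hc hr]
  have := comp_aux (x := x) hr hr2 hrc
  by_contra hcon
  push Not at hcon
  nlinarith [mul_nonneg (sub_nonneg.2 hqb) (sub_nonneg.2 hx),
    mul_pos hr (show 0 < r * (1 + b * x) - c * (1 + q * x) by linarith)]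

lemma hh_right {q b r c x : ℝ} (hr : 0 < r) (hc : 0 < c) (hqb : q ≤ b)
    (hr2 : r * r = 1 + q * q) (hrc : c * r = 1 + b * q) (hx : q ≤ x) :
    hh q b r c x = (1 + q * x) / r := by
  apply min_eq_right
  rw [div_le_div_iff₀ hr hc]
  have := comp_aux (x := x) hr hr2 hrc
  by_contra hcon
  push Not at hcon
  nlinarith [mul_nonneg (sub_nonneg.2 hqb) (sub_nonneg.2 hx),
    mul_pos hr (show 0 < c * (1 + q * x) - r * (1 + b * x) by linarith)]

lemma hh_nonneg {q b r c x : ℝ} (hb : 0 < b) (hr : 0 < r) (hc : 0 < c) (hqb : q ≤ b)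
    (hr2 : r * r = 1 + q * q) (hrc : c * r = 1 + b * q) (hx : -1 / b ≤ x) (hxb : x ≤ b) :
    0 ≤ hh q b r c x := by
  rcases le_total x q with h | h
  · rw [hh_left hr hc hqb hr2 hrc h]
    rw [div_le_iff₀ hb] at hx
    exact div_nonneg (by linarith) hc.le
  · rw [hh_right hr hc hqb hr2 hrc h]
    refine div_nonneg ?_ hr.le
    have h1 : 0 < 1 + b * q := by rw [← hrc]; positivity
    rcases le_total 0 q with h0 | h0 <;> nlinarith

lemma fubini_QQ {q b r c : ℝ} (hb : 0 < b) (hr : 0 < r) (hc : 0 < c) (hqb : q ≤ b)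
    (hr2 : r * r = 1 + q * q) (hrc : c * r = 1 + b * q) (f : ℝ × ℝ → ℝ)
    (hf : IntegrableOn (fun y : Fin 2 → ℝ => f (y 0, y 1)) (QQ q b r c)) :
    ∫ y in QQ q b r c, f (y 0, y 1) =
      ∫ x in (-1 / b)..b, ∫ y in (-hh q b r c x)..(hh q b r c x), f (x, y) := by
  set Q' : Set (ℝ × ℝ) := {z | z.1 ≤ b ∧ c * |z.2| ≤ 1 + b * z.1 ∧ r * |z.2| ≤ 1 + q * z.1}
    with hQ'
  have hpre : QQ q b r c = (MeasurableEquiv.finTwoArrow (α := ℝ)) ⁻¹' Q' := by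
    ext y; simp [QQ, hQ', MeasurableEquiv.finTwoArrow]
  have hmp := volume_preserving_finTwoArrow ℝ
  have hQm : MeasurableSet Q' := by
    have : IsClosed Q' := by
      refine IsClosed.and ?_ (IsClosed.and ?_ ?_)
      · exact isClosed_le (by fun_prop) (by fun_prop)
      · exact isClosed_le (by fun_prop) (by fun_prop)
      · exact isClosed_le (by fun_prop) (by fun_prop)
    exact this.measurableSet
  have e1 : ∫ y in QQ q b r c, f (y 0, y 1) = ∫ z in Q', f z := by
    rw [hpre, ← hmp.setIntegral_preimage_emb (MeasurableEquiv.measurableEmbedding _)]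
    rfl
  have hfi : IntegrableOn f Q' := by
    rw [← hmp.integrableOn_comp_preimage (MeasurableEquiv.measurableEmbedding _), ← hpre]
    exact hf
  have hneg : -1 / b ≤ b := by
    have : -1 / b < 0 := div_neg_of_neg_of_pos (by norm_num) hb
    linarith
  rw [e1, ← integral_indicator hQm, Measure.volume_eq_prod, integral_prod]
  swap
  · exact (integrable_indicator_iff hQm).2 hfi
  rw [intervalIntegral.integral_of_le hneg, ← integral_Icc_eq_integral_Ioc,
    ← integral_indicator measurableSet_Icc]
  congr 1
  ext x
  by_cases hx : x ∈ Set.Icc (-1 / b) b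
  · rw [Set.indicator_of_mem hx]
    have hn := hh_nonneg hb hr hc hqb hr2 hrc hx.1 hx.2
    rw [intervalIntegral.integral_of_le (by linarith), ← integral_Icc_eq_integral_Ioc,
      ← integral_indicator measurableSet_Icc]
    congr 1
    ext y
    have : (x, y) ∈ Q' ↔ y ∈ Set.Icc (-hh q b r c x) (hh q b r c x) := by
      rw [Set.mem_Icc, ← abs_le, hh, le_min_iff, le_div_iff₀ hc, le_div_iff₀ hr]
      simp [hQ', hx.2, mul_comm]
    by_cases hy : (x, y) ∈ Q'
    · rw [Set.indicator_of_mem hy, Set.indicator_of_mem (this.1 hy)]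
    · rw [Set.indicator_of_notMem hy, Set.indicator_of_notMem (fun h => hy (this.2 h))]
  · rw [Set.indicator_of_notMem hx]
    have : ∀ y, Q'.indicator f (x, y) = 0 := by
      intro y
      apply Set.indicator_of_notMem
      rintro ⟨h1, h2, h3⟩
      simp only at h1 h2
      refine hx ⟨?_, h1⟩
      have : 0 ≤ c * |y| := by positivity
      rw [div_le_iff₀ hb]; linarith
    simp [this]

lemma int_QQ {q b r c : ℝ} (hb : 0 < b) (hr : 0 < r) (hc : 0 < c) (hqb : q ≤ b)
    (hr2 : r * r = 1 + q * q) (hrc : c * r = 1 + b * q)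
    (hf : q ^ 3 * b - q ^ 2 * b ^ 2 - q ^ 2 + 2 * q * b ^ 5 + q * b + 3 * b ^ 4 = 1) :
    ∫ y in QQ q b r c, y = 0 := by
  have hsub := QQ_sub (q := q) (r := r) hb hc
  have hid : IntegrableOn (fun y : Fin 2 → ℝ => y) (QQ q b r c) := by
    refine Measure.integrableOn_of_bounded (M := b + 1 / b + (1 + b * b) / c)
      (vol_box_lt hsub) aestronglyMeasurable_id ?_
    filter_upwards [ae_restrict_mem (QQ_meas q b r c)] with y hy
    rw [pi_norm_le_iff_of_nonneg (by positivity)]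
    intro i
    obtain ⟨a, b⟩ := hsub hy
    fin_cases i
    · exact a
    · exact b
  have hi : ∀ i, IntegrableOn (fun y : Fin 2 → ℝ => y i) (QQ q b r c) := fun i =>
    (ContinuousLinearMap.proj (R := ℝ) (φ := fun _ : Fin 2 => ℝ) i).integrable_comp hid
  have hc' : ∀ i, (∫ y in QQ q b r c, y) i = ∫ y in QQ q b r c, y i := fun i =>
    ((ContinuousLinearMap.proj (R := ℝ) (φ := fun _ : Fin 2 => ℝ) i).integral_comp_comm hid).symm
  have hlq : -1 / b ≤ q := by
    have : 0 < 1 + b * q := by rw [← hrc]; positivity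
    rw [div_le_iff₀ hb]; linarith
  ext i
  rw [hc']
  fin_cases i
  · have := fubini_QQ hb hr hc hqb hr2 hrc (fun z => z.1) (hi 0)
    simp only [Fin.zero_eta, Pi.zero_apply]
    simp only at this
    rw [this]
    simp only [intervalIntegral.integral_const, smul_eq_mul]
    have hcont : Continuous (fun x => (hh q b r c x - -hh q b r c x) * x) := by
      unfold hh; fun_prop
    rw [← intervalIntegral.integral_add_adjacent_intervals (b := q)
      (hcont.intervalIntegrable _ _) (hcont.intervalIntegrable _ _)]
    have i1 : ∫ x in (-1 / b)..q, (hh q b r c x - -hh q b r c x) * x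
        = ∫ x in (-1 / b)..q, ((2 / c) * x + (2 * b / c) * x ^ 2) := by
      apply intervalIntegral.integral_congr
      intro x hx
      rw [Set.uIcc_of_le hlq] at hx
      simp only [hh_left hr hc hqb hr2 hrc hx.2]
      ring
    have i2 : ∫ x in q..b, (hh q b r c x - -hh q b r c x) * x
        = ∫ x in q..b, ((2 / r) * x + (2 * q / r) * x ^ 2) := by
      apply intervalIntegral.integral_congr
      intro x hx
      rw [Set.uIcc_of_le hqb] at hx
      simp only [hh_right hr hc hqb hr2 hrc hx.1]
      ring
    have poly : ∀ u v s t : ℝ, ∫ x in s..t, (u * x + v * x ^ 2)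
        = u * ((t ^ 2 - s ^ 2) / 2) + v * ((t ^ 3 - s ^ 3) / 3) := by
      intro u v s t
      rw [intervalIntegral.integral_add (Continuous.intervalIntegrable (by fun_prop) _ _)
        (Continuous.intervalIntegrable (by fun_prop) _ _)]
      rw [intervalIntegral.integral_const_mul u (fun x => x),
        intervalIntegral.integral_const_mul v (fun x => x ^ 2), integral_id, integral_pow]
      norm_num
    rw [i1, i2, poly, poly]
    have hcr : c = (1 + b * q) / r := by field_simp; linarith
    have hpos : 0 < 1 + b * q := by rw [← hrc]; positivity
    have hr2' : r ^ 2 = 1 + q ^ 2 := by linarith [sq r, sq q]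
    rw [hcr]
    have hne := hpos.ne'
    have hbne := hb.ne'
    have hrne := hr.ne'
    have E : 2 / ((1 + b * q) / r) * ((q ^ 2 - (-1 / b) ^ 2) / 2) +
        2 * b / ((1 + b * q) / r) * ((q ^ 3 - (-1 / b) ^ 3) / 3) +
        (2 / r * ((b ^ 2 - q ^ 2) / 2) + 2 * q / r * ((b ^ 3 - q ^ 3) / 3))
      = (r ^ 2 * (3 * b ^ 2 * q ^ 2 + 2 * b ^ 3 * q ^ 3 - 1) + (1 + b * q) * b ^ 2 *
          (3 * b ^ 2 + 2 * q * b ^ 3 - 3 * q ^ 2 - 2 * q ^ 4)) / (3 * b ^ 2 * r * (1 + b * q)) := by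
      field_simp
      ring
    rw [E, hr2', div_eq_zero_iff]
    left
    linear_combination (1 + b * q) * hf
  · have := fubini_QQ hb hr hc hqb hr2 hrc (fun z => z.2) (hi 1)
    simp only [Fin.mk_one, Pi.zero_apply]
    simp only at this
    rw [this]
    simp

lemma int_neg (K : Set (Fin 2 → ℝ)) (h : ∫ y in K, y = 0) : ∫ y in -K, y = 0 := by
  have := (Measure.measurePreserving_neg (volume : Measure (Fin 2 → ℝ))).setIntegral_preimage_emb
    (MeasurableEquiv.neg (Fin 2 → ℝ)).measurableEmbedding (fun y => -y) K
  simp only [neg_neg] at this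
  rw [integral_neg, h, neg_zero] at this
  exact this

theorem stmt16 (b q : ℝ) (hb : 0 < b) (hq : q ∈ Set.Ioc (-1/b) b)
    (hf : q ^ 3 * b - q ^ 2 * b ^ 2 - q ^ 2 + 2 * q * b ^ 5 + q * b + 3 * b ^ 4 = 1) :
    bary (pent q b) = 0 ∧ bary (polarBody (pent q b)) = 0 ∧
      fderiv ℝ (FK (pent q b)) (0, 0) = 0 := by
  obtain ⟨hq1, hqb⟩ := hq
  set r := Real.sqrt (1 + q ^ 2) with hr
  have hrpos : 0 < r := Real.sqrt_pos.2 (by positivity)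
  have hpos : 0 < 1 + b * q := by
    rw [div_lt_iff₀ hb] at hq1; linarith
  set c := (1 + b * q) / r with hc
  have hcpos : 0 < c := by positivity
  have hr2 : r * r = 1 + q * q := by
    rw [hr, Real.mul_self_sqrt (by positivity)]; ring
  have hrc : c * r = 1 + b * q := by rw [hc]; field_simp
  have hP : pent q b = QQ q b r c := hull_eq hb hrpos hcpos hqb hpos hr2 hrc
  have hpol : polarBody (QQ q b r c) = -QQ q b r c := by
    rw [← polar_VV hb hrpos hcpos, ← hull_eq hb hrpos hcpos hqb hpos hr2 hrc, polar_hull]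
  have h0 := int_QQ hb hrpos hcpos hqb hr2 hrc hf
  have h0' := int_neg _ h0
  rw [hP]
  refine ⟨by rw [bary, h0, smul_zero], by rw [bary, hpol, h0', smul_zero], ?_⟩
  obtain ⟨d, hd, hsub⟩ := box_sub_QQ (q := q) hb hrpos hcpos
  exact crit (by positivity) hd (QQ_meas q b r c) (QQ_sub hb hcpos) hsub hpol h0'
end
end

section
/- There exist b > 0 and q ∈ (−1/b, b) with f(q,b) = q³b − q²b² − q² + 2qb⁵ + qb + 3b⁴ = 1 (so that the pentagon P = P_{q,b} and its polar P° both have barycenter at the origin) such that tr( cov(P) · cov(P°) ) > 1/8. -/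
open MeasureTheory

noncomputable section

def hS (r c q b : ℝ) : Set (Fin 2 → ℝ) :=
  {p | p 0 ≤ b ∧ -(p 0) * q + r * p 1 ≤ 1 ∧ -(p 0) * q - r * p 1 ≤ 1 ∧
    -(p 0) * b + c * p 1 ≤ 1 ∧ -(p 0) * b - c * p 1 ≤ 1}

def hgt (r c q b x : ℝ) : ℝ := min ((1 + b * x) / c) ((1 + q * x) / r)

def hull5 (r c q b : ℝ) : Set (Fin 2 → ℝ) :=
  convexHull ℝ {![-1/b, 0], ![q, r], ![q, -r], ![b, c], ![b, -c]}

lemma abs_mul_pos' (y c : ℝ) (hc : 0 < c) : |y| * c = |y * c| := by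
  rw [abs_mul, abs_of_pos hc]

lemma seg_mem (K : Set (Fin 2 → ℝ)) (hK : Convex ℝ K) (x y h : ℝ)
    (h1 : ![x, h] ∈ K) (h2 : ![x, -h] ∈ K) (hy : |y| ≤ h) : ![x, y] ∈ K := by
  rcases (abs_nonneg y |>.trans hy).eq_or_lt with h0 | h0
  · have : y = h := by
      rw [← h0] at hy
      have := abs_nonpos_iff.mp hy
      rw [this, h0]
    rw [this]; exact h1
  · have ha := abs_le.mp hy
    have := hK h1 h2 (a := (h + y) / (2 * h)) (b := (h - y) / (2 * h))
      (by apply div_nonneg <;> linarith) (by apply div_nonneg <;> linarith)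
      (by field_simp; ring)
    convert this using 1
    ext i; fin_cases i
    · simp; field_simp; ring
    · simp; field_simp; ring

lemma lin_mem (K : Set (Fin 2 → ℝ)) (hK : Convex ℝ K) (x1 y1 x2 y2 x y : ℝ)
    (h1 : ![x1, y1] ∈ K) (h2 : ![x2, y2] ∈ K) (hlt : x1 < x2) (hx1 : x1 ≤ x) (hx2 : x ≤ x2)
    (hy : y * (x2 - x1) = y1 * (x2 - x) + y2 * (x - x1)) : ![x, y] ∈ K := by
  have hd : x2 - x1 ≠ 0 := by linarith
  have := hK h1 h2 (a := (x2 - x) / (x2 - x1)) (b := (x - x1) / (x2 - x1))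
      (by apply div_nonneg <;> linarith) (by apply div_nonneg <;> linarith)
      (by field_simp; ring)
  convert this using 1
  ext i; fin_cases i
  · simp; field_simp; ring
  · simp; field_simp; linarith

section
variable {r c q b : ℝ} (hr : 0 < r) (hr2 : r * r = 1 + q * q) (hc : c * r = 1 + b * q)
  (hc0 : 0 < c) (hq : 0 < q) (hqb : q < b)

include hr hr2 hc hc0 hq hqb

lemma hull_eq_s19 : hull5 r c q b = hS r c q b := by
  have hb : 0 < b := hq.trans hqb
  have hcr : c ^ 2 ≤ 1 + b ^ 2 := by
    have : c ^ 2 * (r * r) ≤ (1 + b ^ 2) * (r * r) := by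
      have : c ^ 2 * (r * r) = (1 + b * q) ^ 2 := by rw [← hc]; ring
      rw [this, hr2]; nlinarith [sq_nonneg (b - q)]
    exact le_of_mul_le_mul_right this (by positivity)
  apply Set.Subset.antisymm
  · apply convexHull_min
    · have h1 : 1 / b * b = 1 := by field_simp
      have h2 : 1 / b * q ≤ 1 := by calc 1 / b * q ≤ 1 / b * b := by gcongr
          _ = 1 := h1
      have h3 : 0 < 1 / b := by positivity
      intro p hp
      simp only [Set.mem_insert_iff, Set.mem_singleton_iff] at hp
      have h4 : -1 / b = -(1 / b) := by ring
      rcases hp with rfl | rfl | rfl | rfl | rfl <;> 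
        refine ⟨?_, ?_, ?_, ?_, ?_⟩ <;> simp [-one_div, h4] <;> nlinarith [mul_pos hr hc0, mul_pos hb hq]
    · intro p hp p' hp' s t hs ht hst
      obtain ⟨a1, a2, a3, a4, a5⟩ := hp
      obtain ⟨b1, b2, b3, b4, b5⟩ := hp'
      have hs' : s = 1 - t := by linarith
      refine ⟨?_, ?_, ?_, ?_, ?_⟩ <;> simp only [Pi.add_apply, Pi.smul_apply, smul_eq_mul]
      · nlinarith [mul_le_mul_of_nonneg_left a1 hs, mul_le_mul_of_nonneg_left b1 ht]
      · nlinarith [mul_le_mul_of_nonneg_left a2 hs, mul_le_mul_of_nonneg_left b2 ht]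
      · nlinarith [mul_le_mul_of_nonneg_left a3 hs, mul_le_mul_of_nonneg_left b3 ht]
      · nlinarith [mul_le_mul_of_nonneg_left a4 hs, mul_le_mul_of_nonneg_left b4 ht]
      · nlinarith [mul_le_mul_of_nonneg_left a5 hs, mul_le_mul_of_nonneg_left b5 ht]
  · intro p hp
    obtain ⟨a1, a2, a3, a4, a5⟩ := hp
    have hK : Convex ℝ (hull5 r c q b) := convex_convexHull ℝ _
    have v1 : ![-1/b, 0] ∈ hull5 r c q b := subset_convexHull ℝ _ (by simp)
    have v2 : ![q, r] ∈ hull5 r c q b := subset_convexHull ℝ _ (by simp)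
    have v3 : ![q, -r] ∈ hull5 r c q b := subset_convexHull ℝ _ (by simp)
    have v4 : ![b, c] ∈ hull5 r c q b := subset_convexHull ℝ _ (by simp)
    have v5 : ![b, -c] ∈ hull5 r c q b := subset_convexHull ℝ _ (by simp)
    have hp : p = ![p 0, p 1] := by ext i; fin_cases i <;> rfl
    rw [hp]
    generalize p 0 = x at *
    generalize p 1 = y at *
    have hx : -1 / b ≤ x := by rw [div_le_iff₀ hb]; linarith
    have hbq : -1 / b < q := lt_trans (by rw [div_lt_iff₀ hb]; linarith) hq
    rcases le_total x q with hxq | hxq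
    · apply seg_mem _ hK x y ((1 + b * x) / c)
      · apply lin_mem _ hK _ _ _ _ _ _ v1 v2 hbq hx hxq
        have : r = (1 + b * q) / c := by field_simp; linarith
        rw [this]; field_simp; ring
      · apply lin_mem _ hK _ _ _ _ _ _ v1 v3 hbq hx hxq
        have : r = (1 + b * q) / c := by field_simp; linarith
        rw [this]; field_simp; ring
      · rw [le_div_iff₀ hc0, abs_mul_pos' _ _ hc0, abs_le]
        constructor <;> linarith
    · have e1 : c = (1 + b * q) / r := by field_simp; linarith
      have e2 : r = (1 + q * q) / r := by field_simp; linarith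
      have e3 : (1 + q * x) / r * (b - q) = r * (b - x) + c * (x - q) := by
        field_simp
        linear_combination (-(b - x)) * hr2 - (x - q) * hc
      apply seg_mem _ hK x y ((1 + q * x) / r)
      · exact lin_mem _ hK _ _ _ _ _ _ v2 v4 hqb hxq a1 e3
      · exact lin_mem _ hK _ _ _ _ _ _ v3 v5 hqb hxq a1 (by linarith)
      · rw [le_div_iff₀ hr, abs_mul_pos' _ _ hr, abs_le]
        constructor <;> linarith

lemma polar_eq : polarBody (hull5 r c q b) = -(hS r c q b) := by
  have hb : 0 < b := hq.trans hqb
  ext y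
  simp only [Set.mem_neg, polarBody, hS, Set.mem_setOf_eq, Pi.neg_apply]
  constructor
  · intro h
    have v1 := h ![-1/b, 0] (subset_convexHull ℝ _ (by simp))
    have v2 := h ![q, r] (subset_convexHull ℝ _ (by simp))
    have v3 := h ![q, -r] (subset_convexHull ℝ _ (by simp))
    have v4 := h ![b, c] (subset_convexHull ℝ _ (by simp))
    have v5 := h ![b, -c] (subset_convexHull ℝ _ (by simp))
    simp at v1 v2 v3 v4 v5
    refine ⟨?_, by linarith, by linarith, by linarith, by linarith⟩
    have : -1 / b * y 0 * b = - y 0 := by field_simp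
    nlinarith
  · rintro ⟨a1, a2, a3, a4, a5⟩
    have hcv : Convex ℝ {x : Fin 2 → ℝ | x 0 * y 0 + x 1 * y 1 ≤ 1} := by
      intro p hp p' hp' s t hs ht hst
      simp only [Set.mem_setOf_eq, Pi.add_apply, Pi.smul_apply, smul_eq_mul] at *
      nlinarith [mul_le_mul_of_nonneg_left hp hs, mul_le_mul_of_nonneg_left hp' ht]
    have : hull5 r c q b ⊆ {x : Fin 2 → ℝ | x 0 * y 0 + x 1 * y 1 ≤ 1} := by
      apply convexHull_min _ hcv
      intro p hp
      simp only [Set.mem_insert_iff, Set.mem_singleton_iff] at hp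
      rcases hp with rfl | rfl | rfl | rfl | rfl <;> simp
      · rw [div_mul_eq_mul_div, div_le_iff₀ hb]; linarith
      all_goals linarith
    exact fun x hx => this hx

lemma integral_hS (g : ℝ → ℝ → ℝ) (hg : Continuous (fun p : ℝ × ℝ => g p.1 p.2)) :
    ∫ p in hS r c q b, g (p 0) (p 1) =
      ∫ x in (-1/b)..b, ∫ y in (-hgt r c q b x)..(hgt r c q b x), g x y := by
  have hb : 0 < b := hq.trans hqb
  have hcomp : IsCompact (hS r c q b) := by
    rw [← hull_eq_s19 hr hr2 hc hc0 hq hqb]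
    exact (Set.toFinite _).isCompact_convexHull ℝ
  let e := MeasurableEquiv.finTwoArrow (α := ℝ)
  have he : MeasurePreserving e volume volume := volume_preserving_finTwoArrow ℝ
  let T : Set (ℝ × ℝ) := {p | ![p.1, p.2] ∈ hS r c q b}
  have hT : hS r c q b = e ⁻¹' T := by
    ext p; simp [T, e, hS]
  have hTc : IsCompact T := by
    have : T = (fun p : Fin 2 → ℝ => (p 0, p 1)) '' hS r c q b := by
      ext p; constructor
      · intro h; exact ⟨_, h, by simp⟩
      · rintro ⟨p', h, rfl⟩
        simpa [T, hS] using h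
    rw [this]; exact hcomp.image (by fun_prop)
  have h1 : ∫ p in hS r c q b, g (p 0) (p 1) = ∫ p in T, g p.1 p.2 := by
    rw [hT]
    exact he.setIntegral_preimage_emb e.measurableEmbedding (fun p => g p.1 p.2) T
  have hint : IntegrableOn (fun p : ℝ × ℝ => g p.1 p.2) T := hg.continuousOn.integrableOn_compact hTc
  have hTm := hTc.measurableSet
  have hbb : -1 / b ≤ b := le_trans (by rw [div_le_iff₀ hb]; linarith) hb.le
  rw [h1, ← integral_indicator hTm, Measure.volume_eq_prod, integral_prod, 
    intervalIntegral.integral_of_le hbb, ← integral_Icc_eq_integral_Ioc, ← integral_indicator measurableSet_Icc]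
  · congr 1
    ext x
    by_cases hx : x ∈ Set.Icc (-1 / b) b
    · rw [Set.indicator_of_mem hx]
      have k1 : 0 ≤ 1 + b * x := by
        have := hx.1; rw [div_le_iff₀ hb] at this; linarith
      have k2 : 0 ≤ 1 + q * x := by
        rcases le_total 0 x with h | h
        · positivity
        · nlinarith
      have hh : 0 ≤ hgt r c q b x := le_min (by positivity) (by positivity)
      rw [intervalIntegral.integral_of_le (by linarith), ← integral_Icc_eq_integral_Ioc,
        ← integral_indicator measurableSet_Icc]
      congr 1
      ext y
      have : (x, y) ∈ T ↔ y ∈ Set.Icc (-hgt r c q b x) (hgt r c q b x) := by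
        rw [Set.mem_Icc, ← abs_le, hgt, le_min_iff, le_div_iff₀ hc0, le_div_iff₀ hr,
          abs_mul_pos' _ _ hc0, abs_mul_pos' _ _ hr, abs_le, abs_le]
        simp only [T, hS, Set.mem_setOf_eq]
        simp
        constructor
        · rintro ⟨a1, a2, a3, a4, a5⟩
          refine ⟨⟨?_, ?_⟩, ?_, ?_⟩ <;> linarith
        · rintro ⟨⟨a1, a2⟩, a3, a4⟩
          refine ⟨hx.2, ?_, ?_, ?_, ?_⟩ <;> linarith
      by_cases hy : (x, y) ∈ T
      · rw [Set.indicator_of_mem hy, Set.indicator_of_mem (this.mp hy)]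
      · rw [Set.indicator_of_notMem hy, Set.indicator_of_notMem (fun h => hy (this.mpr h))]
    · rw [Set.indicator_of_notMem hx]
      have : ∀ y, T.indicator (fun p : ℝ × ℝ => g p.1 p.2) (x, y) = 0 := by
        intro y
        apply Set.indicator_of_notMem
        intro hm
        apply hx
        simp only [T, hS, Set.mem_setOf_eq] at hm
        simp at hm
        obtain ⟨a1, a2, a3, a4, a5⟩ := hm
        refine ⟨?_, a1⟩
        rw [div_le_iff₀ hb]; linarith
      simp [this]
  · rw [← Measure.volume_eq_prod]
    exact hint.integrable_indicator hTm

lemma integral_split (F : ℝ → ℝ → ℝ) (hF : Continuous (fun p : ℝ × ℝ => F p.1 p.2)) :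
    ∫ x in (-1/b)..b, F x (hgt r c q b x) =
      (∫ x in (-1/b)..q, F x ((1 + b * x) / c)) + ∫ x in q..b, F x ((1 + q * x) / r) := by
  have hb : 0 < b := hq.trans hqb
  have hbq : -1 / b < q := lt_trans (by rw [div_lt_iff₀ hb]; linarith) hq
  have key : ∀ x, (1 + q * x) / r - (1 + b * x) / c = (b - q) * (q - x) / (r * (1 + b * q)) := by
    intro x
    have hce : c = (1 + b * q) / r := by field_simp; linarith
    have hu : 1 + b * q ≠ 0 := by positivity
    have hrr : r ^ 2 = 1 + q * q := by rw [← hr2]; ring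
    rw [hce]
    field_simp
    rw [hrr]; ring
  have hcont : Continuous (fun x => F x (hgt r c q b x)) := by
    unfold hgt
    exact hF.comp (by fun_prop : Continuous fun x => (x, min ((1 + b * x) / c) ((1 + q * x) / r)))
  rw [← intervalIntegral.integral_add_adjacent_intervals (b := q) (hcont.intervalIntegrable _ _)
    (hcont.intervalIntegrable _ _)]
  congr 1
  · apply intervalIntegral.integral_congr
    intro x hx
    rw [Set.uIcc_of_le hbq.le] at hx
    simp only [hgt]
    rw [min_eq_left]
    have := key x
    have h0 : 0 ≤ (b - q) * (q - x) / (r * (1 + b * q)) :=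
      div_nonneg (mul_nonneg (by linarith) (by linarith [hx.2])) (by positivity)
    linarith
  · apply intervalIntegral.integral_congr
    intro x hx
    rw [Set.uIcc_of_le hqb.le] at hx
    simp only [hgt]
    rw [min_eq_right]
    have := key x
    have h0 : (b - q) * (q - x) / (r * (1 + b * q)) ≤ 0 :=
      div_nonpos_of_nonpos_of_nonneg (mul_nonpos_of_nonneg_of_nonpos (by linarith) (by linarith [hx.1]))
        (by positivity)
    linarith

lemma int_one : r * ∫ p in hS r c q b, (1 : ℝ) =
    (1 + q * q) * (1 + b * q) / b + 2 * (b - q) + q * (b ^ 2 - q ^ 2) := by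
  have hb : 0 < b := hq.trans hqb
  have h := integral_hS hr hr2 hc hc0 hq hqb (fun _ _ => 1) (by fun_prop)
  have h2 : ∀ x, (∫ y in (-hgt r c q b x)..(hgt r c q b x), (1 : ℝ)) = 2 * hgt r c q b x := by
    intro x; simp; ring
  simp only [h2] at h
  rw [h, integral_split hr hr2 hc hc0 hq hqb (fun _ h => 2 * h) (by fun_prop)]
  rw [intervalIntegral.integral_eq_sub_of_hasDerivAt (f := fun x => (1 + b * x) ^ 2 / (b * c)),
    intervalIntegral.integral_eq_sub_of_hasDerivAt (f := fun x => (2 * x + q * x ^ 2) / r)]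
  · have hce : c = (1 + b * q) / r := by field_simp; linarith
    have hu : 1 + b * q ≠ 0 := by positivity
    have hrr : r ^ 2 = 1 + q * q := by rw [← hr2]; ring
    rw [hce]
    field_simp
    rw [hrr]; ring
  · intro x _
    refine HasDerivAt.congr_deriv (((((hasDerivAt_id x).const_mul 2).add (((hasDerivAt_id x).pow 2).const_mul q)).div_const r)) ?_
    simp; field_simp; try norm_num
    try ring
  · exact Continuous.intervalIntegrable (by fun_prop) _ _
  · intro x _
    refine HasDerivAt.congr_deriv (((((hasDerivAt_id x).const_mul b).const_add 1).pow 2).div_const (b * c)) ?_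
    simp; field_simp; try norm_num
    try ring
  · exact Continuous.intervalIntegrable (by fun_prop) _ _

lemma int_x : r * ∫ p in hS r c q b, p 0 * p 0 =
    (1 + q * q) * (1 + b * q) * (3 * b ^ 2 * q ^ 2 - 2 * b * q + 1) / (6 * b ^ 3)
      + 2 * (b ^ 3 - q ^ 3) / 3 + q * (b ^ 4 - q ^ 4) / 2 := by
  have hb : 0 < b := hq.trans hqb
  have h := integral_hS hr hr2 hc hc0 hq hqb (fun x _ => x * x) (by fun_prop)
  have h2 : ∀ x, (∫ y in (-hgt r c q b x)..(hgt r c q b x), x * x) =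
      2 * x ^ 2 * hgt r c q b x := by
    intro x; simp; ring
  simp only [h2] at h
  rw [h, integral_split hr hr2 hc hc0 hq hqb (fun x h => 2 * x ^ 2 * h) (by fun_prop)]
  rw [intervalIntegral.integral_eq_sub_of_hasDerivAt
      (f := fun x => (2 / 3 * x ^ 3 + b / 2 * x ^ 4) / c),
    intervalIntegral.integral_eq_sub_of_hasDerivAt
      (f := fun x => (2 / 3 * x ^ 3 + q / 2 * x ^ 4) / r)]
  · have hce : c = (1 + b * q) / r := by field_simp; linarith
    have hu : 1 + b * q ≠ 0 := by positivity
    have hrr : r ^ 2 = 1 + q * q := by rw [← hr2]; ring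
    rw [hce]
    field_simp
    rw [hrr]; ring
  · intro x _
    refine HasDerivAt.congr_deriv (((((hasDerivAt_id x).pow 3).const_mul (2 / 3)).add (((hasDerivAt_id x).pow 4).const_mul (q / 2))).div_const r) ?_
    simp; field_simp; try norm_num
    try ring
  · exact Continuous.intervalIntegrable (by fun_prop) _ _
  · intro x _
    refine HasDerivAt.congr_deriv (((((hasDerivAt_id x).pow 3).const_mul (2 / 3)).add (((hasDerivAt_id x).pow 4).const_mul (b / 2))).div_const c) ?_
    simp; field_simp; try norm_num
    try ring
  · exact Continuous.intervalIntegrable (by fun_prop) _ _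

lemma int_y : r * ∫ p in hS r c q b, p 1 * p 1 =
    (1 + q * q) ^ 2 * (1 + b * q) / (6 * b)
      + (b - q) * (2 + b * q + q * q) * ((1 + b * q) ^ 2 + (1 + q * q) ^ 2) / (6 * (1 + q * q)) := by
  have hb : 0 < b := hq.trans hqb
  have h := integral_hS hr hr2 hc hc0 hq hqb (fun _ y => y * y) (by fun_prop)
  have h2 : ∀ x, (∫ y in (-hgt r c q b x)..(hgt r c q b x), y * y) =
      2 / 3 * hgt r c q b x ^ 3 := by
    intro x; simp only [← pow_two, integral_pow]; norm_num; ring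
  simp only [h2] at h
  rw [h, integral_split hr hr2 hc hc0 hq hqb (fun _ h => 2 / 3 * h ^ 3) (by fun_prop)]
  rw [intervalIntegral.integral_eq_sub_of_hasDerivAt
      (f := fun x => (1 + b * x) ^ 4 / (6 * b * c ^ 3)),
    intervalIntegral.integral_eq_sub_of_hasDerivAt
      (f := fun x => (1 + q * x) ^ 4 / (6 * q * r ^ 3))]
  · have hce : c = (1 + b * q) / r := by field_simp; linarith
    have hu : 1 + b * q ≠ 0 := by positivity
    have hrr : r ^ 2 = 1 + q * q := by rw [← hr2]; ring
    have hr4 : r ^ 4 = (1 + q * q) ^ 2 := by rw [← hr2]; ring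
    have hr8 : r ^ 8 = (1 + q * q) ^ 4 := by rw [← hr2]; ring
    have hr6 : r ^ 6 = (1 + q * q) ^ 3 := by rw [← hr2]; ring
    have hw : 1 + q * q ≠ 0 := by positivity
    rw [hce, ← hrr]
    field_simp
    ring_nf
    simp only [hr4, hr6, hr8]; ring
  · intro x _
    refine HasDerivAt.congr_deriv (((((hasDerivAt_id x).const_mul q).const_add 1).pow 4).div_const (6 * q * r ^ 3)) ?_
    simp; field_simp; try norm_num
    try ring
  · exact Continuous.intervalIntegrable (by fun_prop) _ _
  · intro x _
    refine HasDerivAt.congr_deriv (((((hasDerivAt_id x).const_mul b).const_add 1).pow 4).div_const (6 * b * c ^ 3)) ?_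
    simp; field_simp; try norm_num
    try ring
  · exact Continuous.intervalIntegrable (by fun_prop) _ _

end

lemma covM_neg (K : Set (Fin 2 → ℝ)) : covM (-K) = covM K := by
  have hm := Measure.measurePreserving_neg (volume : Measure (Fin 2 → ℝ))
  ext i j
  simp only [covM, Matrix.of_apply]
  have h1 : volume (-K) = volume K := Measure.measure_neg _ _
  have h2 : ∫ x in -K, x i * x j = ∫ x in K, x i * x j := by
    have := hm.setIntegral_preimage_emb (MeasurableEquiv.neg (Fin 2 → ℝ)).measurableEmbedding
      (fun x => x i * x j) K
    simpa using this
  rw [h1, h2]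

lemma numA (t : ℝ) (ht : 0 ≤ t) (ht2 : t ≤ 0.003) : 0.244 *
      ((1 + (1 / 4 + t) * (1 / 4 + t)) * (1 + 18 / 25 * (1 / 4 + t)) / (18 / 25) + 2 * (18 / 25 - (1 / 4 + t)) +
        (1 / 4 + t) * ((18 / 25) ^ 2 - (1 / 4 + t) ^ 2)) ≤ (1 + (1 / 4 + t) * (1 / 4 + t)) * (1 + 18 / 25 * (1 / 4 + t)) *
            (3 * (18 / 25) ^ 2 * (1 / 4 + t) ^ 2 - 2 * (18 / 25) * (1 / 4 + t) + 1) /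
          (6 * (18 / 25) ^ 3) +
        2 * ((18 / 25) ^ 3 - (1 / 4 + t) ^ 3) / 3 +
      (1 / 4 + t) * ((18 / 25) ^ 4 - (1 / 4 + t) ^ 4) / 2 := by
  have e2 : t ^ 2 ≤ 0.003 * t := by nlinarith
  have e3 : t ^ 3 ≤ 0.003 * t := by nlinarith [pow_nonneg ht 2]
  have e4 : t ^ 4 ≤ 0.003 * t := by nlinarith [pow_nonneg ht 3]
  have e5 : t ^ 5 ≤ 0.003 * t := by nlinarith [pow_nonneg ht 4]
  have p2 := pow_nonneg ht 2
  have p3 := pow_nonneg ht 3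
  have p4 := pow_nonneg ht 4
  have p5 := pow_nonneg ht 5
  norm_num at *
  ring_nf at *
  linarith

lemma numB (t : ℝ) (ht : 0 ≤ t) (ht2 : t ≤ 0.003) : 0.258 *
      ((1 + (1 / 4 + t) * (1 / 4 + t)) * (1 + 18 / 25 * (1 / 4 + t)) / (18 / 25) + 2 * (18 / 25 - (1 / 4 + t)) +
        (1 / 4 + t) * ((18 / 25) ^ 2 - (1 / 4 + t) ^ 2)) ≤   (1 + (1 / 4 + t) * (1 / 4 + t)) ^ 2 * (1 + 18 / 25 * (1 / 4 + t)) / (6 * (18 / 25)) +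
      (18 / 25 - (1 / 4 + t)) * (2 + 18 / 25 * (1 / 4 + t) + (1 / 4 + t) * (1 / 4 + t)) *
          ((1 + 18 / 25 * (1 / 4 + t)) ^ 2 + (1 + (1 / 4 + t) * (1 / 4 + t)) ^ 2) /
        (6 * (1 + 0.253 * 0.253)) := by
  have e2 : t ^ 2 ≤ 0.003 * t := by nlinarith
  have e3 : t ^ 3 ≤ 0.003 * t := by nlinarith [pow_nonneg ht 2]
  have e4 : t ^ 4 ≤ 0.003 * t := by nlinarith [pow_nonneg ht 3]
  have e5 : t ^ 5 ≤ 0.003 * t := by nlinarith [pow_nonneg ht 4]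
  have e6 : t ^ 6 ≤ 0.003 * t := by nlinarith [pow_nonneg ht 5]
  have e7 : t ^ 7 ≤ 0.003 * t := by nlinarith [pow_nonneg ht 6]
  have p2 := pow_nonneg ht 2
  have p3 := pow_nonneg ht 3
  have p4 := pow_nonneg ht 4
  have p5 := pow_nonneg ht 5
  have p6 := pow_nonneg ht 6
  have p7 := pow_nonneg ht 7
  norm_num at *
  ring_nf at *
  linarith

lemma exists_q : ∃ q ∈ Set.Icc (1/4 : ℝ) (253/1000), 
    q ^ 3 * (18/25) - q ^ 2 * (18/25) ^ 2 - q ^ 2 + 2 * q * (18/25) ^ 5 + q * (18/25) + 3 * (18/25) ^ 4 = 1 := by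
  have hc : ContinuousOn (fun q : ℝ => q ^ 3 * (18/25) - q ^ 2 * (18/25) ^ 2 - q ^ 2 + 2 * q * (18/25) ^ 5 + q * (18/25) + 3 * (18/25) ^ 4) (Set.Icc (1/4 : ℝ) (253/1000)) := by fun_prop
  have := intermediate_value_Icc (by norm_num) hc (show (1:ℝ) ∈ _ by constructor <;> norm_num)
  exact this

set_option maxHeartbeats 2000000 in
theorem stmt19 :
    ∃ b q : ℝ, 0 < b ∧ q ∈ Set.Ioo (-1/b) b ∧
      q ^ 3 * b - q ^ 2 * b ^ 2 - q ^ 2 + 2 * q * b ^ 5 + q * b + 3 * b ^ 4 = 1 ∧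
      (covM (pent q b) * covM (polarBody (pent q b))).trace > 1 / 8 := by
  obtain ⟨q, ⟨hq1, hq2⟩, hf⟩ := exists_q
  refine ⟨18/25, q, by norm_num, ⟨by norm_num; linarith, by linarith⟩, hf, ?_⟩
  clear hf
  have hq : 0 < q := by linarith
  have hqb : q < 18/25 := by linarith
  have hpent : pent q (18/25) = hull5 (Real.sqrt (1 + q ^ 2)) ((1 + 18/25 * q) / Real.sqrt (1 + q ^ 2)) q (18/25) := rfl
  have hr : 0 < Real.sqrt (1 + q ^ 2) := Real.sqrt_pos.mpr (by positivity)
  have hr2 : Real.sqrt (1 + q ^ 2) * Real.sqrt (1 + q ^ 2) = 1 + q * q := by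
    rw [Real.mul_self_sqrt (by positivity)]; ring
  rw [hpent]
  generalize Real.sqrt (1 + q ^ 2) = r at *
  have hc : (1 + 18/25 * q) / r * r = 1 + 18/25 * q := by field_simp
  have hc0 : 0 < (1 + 18/25 * q) / r := by positivity
  generalize (1 + 18/25 * q) / r = c at *
  rw [polar_eq hr hr2 hc hc0 hq hqb, hull_eq_s19 hr hr2 hc hc0 hq hqb, covM_neg]
  have i1 := int_one hr hr2 hc hc0 hq hqb
  have i2 := int_x hr hr2 hc hc0 hq hqb
  have i3 := int_y hr hr2 hc hc0 hq hqb
  have hV : ∫ p in hS r c q (18/25), (1 : ℝ) = (volume (hS r c q (18/25))).toReal := by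
    simp [Measure.real]
  rw [hV] at i1
  have hsym : covM (hS r c q (18/25)) 1 0 = covM (hS r c q (18/25)) 0 1 := by
    simp only [covM, Matrix.of_apply, mul_comm]
  have hA : covM (hS r c q (18/25)) 0 0 = (volume (hS r c q (18/25))).toReal⁻¹ * ∫ p in hS r c q (18/25), p 0 * p 0 := rfl
  have hB : covM (hS r c q (18/25)) 1 1 = (volume (hS r c q (18/25))).toReal⁻¹ * ∫ p in hS r c q (18/25), p 1 * p 1 := rfl
  rw [Matrix.trace_fin_two, Matrix.mul_apply, Matrix.mul_apply, Fin.sum_univ_two, Fin.sum_univ_two, hsym]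
  generalize covM (hS r c q (18/25)) 0 1 = D at *
  generalize covM (hS r c q (18/25)) 0 0 = A at *
  generalize covM (hS r c q (18/25)) 1 1 = B at *
  generalize (∫ p in hS r c q (18/25), p 0 * p 0) = X at *
  generalize (∫ p in hS r c q (18/25), p 1 * p 1) = Y at *
  generalize (volume (hS r c q (18/25))).toReal = V at *
  have hVp : 0 < V := by
    have : 0 < r * V := by
      rw [i1]
      have : 0 < (18/25 : ℝ) ^ 2 - q ^ 2 := by nlinarith
      have : 0 < (18/25 : ℝ) - q := by linarith
      positivity
    exact pos_of_mul_pos_right this hr.le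
  have hA' : 0.244 ≤ A := by
    have : 0.244 * (r * V) ≤ r * X := by
      rw [i1, i2]
      obtain ⟨t, rfl⟩ : ∃ t, q = 1/4 + t := ⟨q - 1/4, by ring⟩
      have ht : 0 ≤ t := by linarith
      have ht2 : t ≤ 0.003 := by linarith
      exact numA t ht ht2
    rw [hA, inv_mul_eq_div, le_div_iff₀ hVp]
    nlinarith
  have hB' : 0.258 ≤ B := by
    have : 0.258 * (r * V) ≤ r * Y := by
      rw [i1, i3]
      have hw : (18/25 - q) * (2 + 18/25 * q + q * q) * ((1 + 18/25 * q) ^ 2 + (1 + q * q) ^ 2) / (6 * (1 + q * q)) ≥ (18/25 - q) * (2 + 18/25 * q + q * q) * ((1 + 18/25 * q) ^ 2 + (1 + q * q) ^ 2) / (6 * (1 + 0.253 * 0.253)) := by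
        apply div_le_div_of_nonneg_left
        · have : 0 ≤ (18/25 : ℝ) - q := by linarith
          positivity
        · positivity
        · nlinarith
      refine le_trans ?_ (add_le_add le_rfl hw)
      obtain ⟨t, rfl⟩ : ∃ t, q = 1/4 + t := ⟨q - 1/4, by ring⟩
      have ht : 0 ≤ t := by linarith
      have ht2 : t ≤ 0.003 := by linarith
      exact numB t ht ht2
    rw [hB, inv_mul_eq_div, le_div_iff₀ hVp]
    nlinarith
  nlinarith [sq_nonneg D]
end
end
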